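/- For every ε > 0 there exist R > 0 and h₀ > 0 such that for every h with 0 < h ≤ h₀ one has |Q − Q^{h,R}| ≤ ε; that is, the truncated lattice discrete-velocity sum approximates the continuous two-dimensional collision integral to within any prescribed accuracy. -/

import Mathlib

/-- The set of lattice points `(x, y) ∈ ℤ²` with `x² + y² = n`. -/
noncomputable def latticeCircle (n : ℕ) : Finset (ℤ × ℤ) :=
  (Finset.Icc (-(n : ℤ)) (n : ℤ) ×ˢ Finset.Icc (-(n : ℤ)) (n : ℤ)).filter
    (fun p => p.1 ^ 2 + p.2 ^ 2 = (n : ℤ))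

/-- `r n` is the number of lattice points on the circle of squared radius `n`. -/
noncomputable def latticeR (n : ℕ) : ℕ := (latticeCircle n).card

/-- The angle `θ_u ∈ [0, 2π)` of a lattice point `u`. -/
noncomputable def latticeTheta (u : ℤ × ℤ) : ℝ :=
  if 0 ≤ Complex.arg ((u.1 : ℂ) + (u.2 : ℂ) * Complex.I)
  then Complex.arg ((u.1 : ℂ) + (u.2 : ℂ) * Complex.I)
  else Complex.arg ((u.1 : ℂ) + (u.2 : ℂ) * Complex.I) + 2 * Real.pi

/-- The exponential sum `S(m, k) = Σ_{u ∈ ℤ², |u|² = m} exp(i k θ_u)`. -/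
noncomputable def latticeS (m : ℕ) (k : ℤ) : ℂ :=
  ∑ u ∈ latticeCircle m, Complex.exp ((k : ℂ) * (latticeTheta u : ℂ) * Complex.I)


/-- The continuous collision value `Q = ∫_{ℝ²} (1/2π) ∫_{-π}^{π} g(w,θ) dθ dw`. -/
noncomputable def Qcont (g : ℝ × ℝ → ℝ → ℝ) : ℝ :=
  ∫ w : ℝ × ℝ, (1 / (2 * Real.pi)) * ∫ θ in (-Real.pi)..Real.pi, g w θ

/-- The truncated lattice discrete-velocity approximation
`Q^{h,R} = h² Σ_{ζ ∈ ℤ², 0 < |hζ| ≤ R} (1/r(|ζ|²)) Σ_{|ζ'| = |ζ|} g(hζ, θ_{ζ'} - θ_ζ)`. -/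
noncomputable def Qdisc (g : ℝ × ℝ → ℝ → ℝ) (h R : ℝ) : ℝ :=
  h ^ 2 *
    ∑ᶠ ζ ∈ {ζ : ℤ × ℤ | ζ ≠ 0 ∧ h ^ 2 * ((ζ.1 : ℝ) ^ 2 + (ζ.2 : ℝ) ^ 2) ≤ R ^ 2},
      (1 / (latticeR (ζ.1 ^ 2 + ζ.2 ^ 2).toNat : ℝ)) *
        ∑ ζ' ∈ latticeCircle (ζ.1 ^ 2 + ζ.2 ^ 2).toNat,
          g (h * (ζ.1 : ℝ), h * (ζ.2 : ℝ)) (latticeTheta ζ' - latticeTheta ζ)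

/-!
Expanding `g w` in a Fourier series on the circle `|ζ'|² = m` replaces the average of
`g (h ζ) (θ_ζ' - θ_ζ)` over `ζ'` by the mean of `g (h ζ)` over a period, with an error at most
`C r(m)⁻¹ ∑_{k ≠ 0} |S(m, k)| / k²`. Summed over the `r(m)` points `ζ` of each circle, the means
form a Riemann sum of `Qcont g` over a disc, and the error tends to `0` as soon as `m ↦ |S(m, k)|`
has mean value `0` for every `k ≠ 0`.

Now `S(m, k)` is the sum over the Gaussian integers of norm `m` of the angular character
`ψ_k z = (z / |z|) ^ k`, and vanishes unless `ψ_k I = 1`. If a prime `p = N π ≡ 1 [MOD 4]` divides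
`m` exactly once, it contributes a factor `2 Re (ψ_k π)` to `S(m, k)` and `2` to `r(m)`. Hence the
mean of `|S(m, k)|` is at most that of `r(m) ∏ |Re (ψ_k π)|`, taken over such `p` in any finite set,
which is small if `∑ (1 - |Re (ψ_k π)|) / p` diverges. As
`1 - Re (ψ_{2k} π) ≤ 4 (1 - |Re (ψ_k π)|)`, it suffices that `∑ (1 - Re (ψ_{2k} π)) / p` diverges.
If it converged, the Euler products of `S(m, 2k)` and `r(m)` would be comparable as `s → 1⁺`. But
`r(m)` has mean value `π`, so that its Dirichlet series has a pole at `s = 1`, while `S(m, 2k)` has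
mean value `0` because `ψ_{2k}` integrates to zero over discs.
-/

open Filter Topology Finset MeasureTheory

section MeanValues

variable {E : Type*} [NormedAddCommGroup E] [NormedSpace ℝ E]

/-- `f` has mean value `μ`: its averages over `{1, …, n}` converge to `μ`. -/
def HasMean (f : ℕ → E) (μ : E) : Prop :=
  Tendsto (fun n : ℕ => (n : ℝ)⁻¹ • ∑ m ∈ Icc 1 n, f m) atTop (𝓝 μ)

namespace HasMean

variable {f g : ℕ → E} {μ ν : E}

theorem congr (hf : HasMean f μ) (h : ∀ m, m ≠ 0 → f m = g m) : HasMean g μ :=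
  Tendsto.congr (fun n => by
    rw [sum_congr rfl fun m hm => h m (Nat.one_le_iff_ne_zero.1 (mem_Icc.1 hm).1)]) hf

theorem add (hf : HasMean f μ) (hg : HasMean g ν) : HasMean (fun m => f m + g m) (μ + ν) := by
  simpa only [HasMean, sum_add_distrib, smul_add] using Tendsto.add hf hg

theorem const_smul {𝕜 : Type*} [NormedRing 𝕜] [Module 𝕜 E] [IsBoundedSMul 𝕜 E]
    [SMulCommClass ℝ 𝕜 E] (c : 𝕜) (hf : HasMean f μ) : HasMean (fun m => c • f m) (c • μ) := by
  simpa only [HasMean, ← smul_sum, smul_comm _ c] using Tendsto.const_smul hf c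

theorem zero_of_norm_le {b : ℕ → ℕ → ℝ} {β : ℕ → ℝ} (hb : ∀ N, HasMean (b N) (β N))
    (hβ : Tendsto β atTop (𝓝 0)) (h : ∀ N m, m ≠ 0 → ‖f m‖ ≤ b N m) : HasMean f 0 := by
  refine Metric.tendsto_nhds.2 fun ε hε => ?_
  obtain ⟨N, hN⟩ := (hβ.eventually_lt_const hε).exists
  filter_upwards [(hb N).eventually_lt_const hN] with n hn
  rw [dist_zero_right, norm_smul, Real.norm_of_nonneg (by positivity)]
  refine lt_of_le_of_lt ?_ hn
  rw [smul_eq_mul]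
  gcongr
  exact norm_sum_le_of_le _ fun m hm => h N m (Nat.one_le_iff_ne_zero.1 (mem_Icc.1 hm).1)

theorem tsum {ι : Type*} [CompleteSpace E] {f : ι → ℕ → E} {μ : ι → E} {a : ι → ℝ} {r : ℕ → ℝ}
    {ρ : ℝ} (hf : ∀ k, HasMean (f k) (μ k)) (ha : Summable a) (hr : HasMean r ρ)
    (hfr : ∀ k m, ‖f k m‖ ≤ a k * r m) :
    HasMean (fun m => ∑' k, f k m) (∑' k, μ k) := by
  obtain ⟨B, hB⟩ := (Metric.isBounded_range_of_tendsto _ hr).exists_norm_le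
  have hsum (m : ℕ) : Summable fun k => f k m :=
    .of_norm_bounded (ha.mul_right _) fun k => hfr k m
  refine (tendsto_tsum_of_dominated_convergence (ha.abs.mul_right B) hf
    (Eventually.of_forall fun n k => ?_)).congr fun n => ?_
  · calc ‖(n : ℝ)⁻¹ • ∑ m ∈ Icc 1 n, f k m‖
        ≤ (n : ℝ)⁻¹ * ∑ m ∈ Icc 1 n, a k * r m := by
          rw [norm_smul, Real.norm_of_nonneg (by positivity)]
          gcongr
          exact norm_sum_le_of_le _ fun m _ => hfr k m
      _ = a k * ((n : ℝ)⁻¹ * ∑ m ∈ Icc 1 n, r m) := by rw [← mul_sum, mul_left_comm]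
      _ ≤ |a k| * B := (le_abs_self _).trans <| by
          rw [abs_mul]
          exact mul_le_mul_of_nonneg_left (hB _ ⟨n, rfl⟩) (abs_nonneg _)
  · rw [Summable.tsum_const_smul _ (summable_sum fun m _ => hsum m),
      Summable.tsum_finsetSum fun m _ => hsum m]

theorem tendsto_sq_smul_sum (hf : HasMean f μ) {R : ℝ} (hR : 0 < R) :
    Tendsto (fun h : ℝ => h ^ 2 • ∑ m ∈ Icc 1 ⌊(R / h) ^ 2⌋₊, f m) (𝓝[>] 0)
      (𝓝 (R ^ 2 • μ)) := by
  have hRh : Tendsto (fun h : ℝ => (R / h) ^ 2) (𝓝[>] 0) atTop :=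
    (tendsto_pow_atTop two_ne_zero).comp (tendsto_inv_nhdsGT_zero.const_mul_atTop hR)
  have hfloor : Tendsto (fun h : ℝ => R ^ 2 * (⌊(R / h) ^ 2⌋₊ / (R / h) ^ 2)) (𝓝[>] 0)
      (𝓝 (R ^ 2)) := by
    simpa using ((tendsto_nat_floor_div_atTop (R := ℝ)).comp hRh).const_mul (R ^ 2)
  refine (hfloor.smul (hf.comp (tendsto_nat_floor_atTop.comp hRh))).congr' ?_
  filter_upwards [self_mem_nhdsWithin, hRh.eventually_ge_atTop 1] with h hh hN
  have hh : h ≠ 0 := ne_of_gt hh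
  have hN : (⌊(R / h) ^ 2⌋₊ : ℝ) ≠ 0 := Nat.cast_ne_zero.2 (Nat.floor_pos.2 hN).ne'
  simp only [Function.comp_apply, smul_smul]
  generalize (⌊(R / h) ^ 2⌋₊ : ℝ) = N at hN
  congr 1
  field_simp

end HasMean

end MeanValues

section Dilation

/-- The dilation of `f` by `p`: the sequence with value `f m` at `p * m` and `0` away from the
multiples of `p`. For `p ≠ 0` its Dirichlet series is `p ^ (-s)` times that of `f`. -/
noncomputable def dilate {E : Type*} [Zero E] (p : ℕ) (f : ℕ → E) : ℕ → E :=
  Function.extend (p * ·) f 0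

theorem dilate_mul {E : Type*} [Zero E] {p : ℕ} (hp : p ≠ 0) (f : ℕ → E) (m : ℕ) :
    dilate p f (p * m) = f m :=
  (mul_right_injective₀ hp).extend_apply f 0 m

theorem dilate_of_not_dvd {E : Type*} [Zero E] {p m : ℕ} (h : ¬ p ∣ m) (f : ℕ → E) :
    dilate p f m = 0 :=
  Function.extend_apply' _ _ _ fun ⟨k, hk⟩ => h ⟨k, hk.symm⟩

theorem dilate_mul_left_of_invariant {R : Type*} [MulZeroClass R] {p : ℕ} (hp : p ≠ 0) {u : ℕ → R}
    (hu : ∀ m, u (p * m) = u m) (f : ℕ → R) (m : ℕ) :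
    dilate p (fun k => u k * f k) m = u m * dilate p f m := by
  by_cases h : p ∣ m
  · obtain ⟨k, rfl⟩ := h
    rw [dilate_mul hp, dilate_mul hp, hu]
  · rw [dilate_of_not_dvd h, dilate_of_not_dvd h, mul_zero]

theorem sum_Icc_dilate {E : Type*} [AddCommMonoid E] {p : ℕ} (hp : p ≠ 0) (f : ℕ → E) (n : ℕ) :
    ∑ m ∈ Icc 1 n, dilate p f m = ∑ m ∈ Icc 1 (n / p), f m := by
  have hp' : 0 < p := hp.bot_lt
  symm
  refine sum_of_injOn (p * ·) (mul_right_injective₀ hp).injOn (fun k hk => ?_) (fun m hm hmk => ?_)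
    fun k _ => (dilate_mul hp f k).symm
  · have hk := mem_Icc.1 hk
    exact mem_coe.2 <| mem_Icc.2
      ⟨Nat.mul_pos hp' hk.1, (Nat.mul_comm _ _).trans_le ((Nat.le_div_iff_mul_le hp').1 hk.2)⟩
  · refine dilate_of_not_dvd (fun ⟨k, hk⟩ => hmk ⟨k, ?_, hk.symm⟩) f
    obtain ⟨h1, hn⟩ := mem_Icc.1 (hk ▸ hm)
    exact mem_coe.2 <| mem_Icc.2 ⟨Nat.pos_of_mul_pos_left h1,
      (Nat.le_div_iff_mul_le hp').2 ((Nat.mul_comm _ _).trans_le hn)⟩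

theorem HasMean.dilate {E : Type*} [NormedAddCommGroup E] [NormedSpace ℝ E] {f : ℕ → E} {μ : E}
    (hf : HasMean f μ) {p : ℕ} (hp : p ≠ 0) : HasMean (dilate p f) ((p : ℝ)⁻¹ • μ) := by
  have hdiv : Tendsto (fun n : ℕ => ((n / p : ℕ) : ℝ) / n) atTop (𝓝 (p : ℝ)⁻¹) := by
    refine ((tendsto_nat_floor_mul_div_atTop (by positivity : 0 ≤ (p : ℝ)⁻¹)).comp
      tendsto_natCast_atTop_atTop).congr fun n => ?_
    rw [Function.comp_apply, inv_mul_eq_div, Nat.floor_div_natCast, Nat.floor_natCast]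
  refine (hdiv.smul (hf.comp (Nat.tendsto_div_const_atTop hp))).congr fun n => ?_
  rw [sum_Icc_dilate hp, Function.comp_apply, smul_smul]
  rcases eq_or_ne (n / p) 0 with h | h
  · simp [h]
  · rw [div_mul_eq_mul_div, mul_inv_cancel₀ (Nat.cast_ne_zero.2 h), one_div]

theorem LSeriesHasSum_dilate {f : ℕ → ℂ} {s a : ℂ} (hf : LSeriesHasSum f s a) {p : ℕ}
    (hp : p ≠ 0) : LSeriesHasSum (dilate p f) s ((p : ℂ) ^ (-s) * a) := by
  have hterm : LSeries.term (dilate p f) s =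
      Function.extend (p * ·) (fun m => (p : ℂ) ^ (-s) * LSeries.term f s m) 0 := by
    ext m
    by_cases h : p ∣ m
    · obtain ⟨m, rfl⟩ := h
      rw [(mul_right_injective₀ hp).extend_apply _ _ m]
      rcases eq_or_ne m 0 with rfl | hm
      · simp
      · rw [LSeries.term_of_ne_zero (mul_ne_zero hp hm), LSeries.term_of_ne_zero hm,
          dilate_mul hp, Nat.cast_mul, Complex.natCast_mul_natCast_cpow, Complex.cpow_neg]
        field
    · rw [Function.extend_apply' _ _ _ fun ⟨k, hk⟩ => h ⟨k, hk.symm⟩, LSeries.term_def,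
        dilate_of_not_dvd h]
      simp
  rw [LSeriesHasSum, hterm, hasSum_extend_zero (mul_right_injective₀ hp)]
  exact hf.mul_left _

end Dilation

section Hecke

variable {R : Type*} [CommRing R]

/-- The relation `f (p m) = a f (m) - b f (m / p)`, where `f (m / p)` is read as `0` if `p ∤ m`. It
says that the Euler factor at `p` of the Dirichlet series of `f` is
`(1 - a p ^ (-s) + b p ^ (-2 s))⁻¹`. -/
def HeckeRelation (f : ℕ → R) (p : ℕ) (a b : R) : Prop :=
  ∀ m, f (p * m) = a * f m - b * dilate p f m

theorem HeckeRelation.apply_mul_of_not_dvd {f : ℕ → R} {p m : ℕ} {a b : R}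
    (hf : HeckeRelation f p a b) (hm : ¬ p ∣ m) : f (p * m) = a * f m := by
  rw [hf m, dilate_of_not_dvd hm, mul_zero, sub_zero]

theorem HeckeRelation.apply_self {f : ℕ → R} {p : ℕ} {a b : R} (hf : HeckeRelation f p a b)
    (hp : p ≠ 1) : f p = a * f 1 := by
  simpa using hf.apply_mul_of_not_dvd (mt Nat.dvd_one.1 hp)

theorem HeckeRelation.mul_left_of_invariant {f : ℕ → R} {p : ℕ} {a b : R}
    (hf : HeckeRelation f p a b) (hp : p ≠ 0) {u : ℕ → R} (hu : ∀ m, u (p * m) = u m) :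
    HeckeRelation (fun m => u m * f m) p a b := fun m => by
  simp only [dilate_mul_left_of_invariant hp hu, hu, hf m]
  ring

open Classical in
/-- The sequence obtained from `f` by erasing the multiples of the elements of `s`. -/
noncomputable def sieve (s : Finset ℕ) (f : ℕ → R) (m : ℕ) : R :=
  if ∃ p ∈ s, p ∣ m then 0 else f m

theorem sieve_empty (f : ℕ → R) : sieve ∅ f = f := by
  ext m
  simp [sieve]

theorem sieve_insert (p : ℕ) (s : Finset ℕ) (f : ℕ → R) :
    sieve (insert p s) f = sieve {p} (sieve s f) := by
  ext m
  by_cases h : p ∣ m <;> simp [sieve, h]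

theorem HeckeRelation.sieve {f : ℕ → R} {p : ℕ} {a b : R} (hf : HeckeRelation f p a b)
    (hp : p.Prime) {s : Finset ℕ} (hs : ∀ q ∈ s, q.Prime) (hps : p ∉ s) :
    HeckeRelation (sieve s f) p a b := by
  classical
  have hdvd {q : ℕ} (hq : q ∈ s) (m : ℕ) : q ∣ p * m ↔ q ∣ m := by
    refine ⟨fun h => ((hs q hq).dvd_mul.1 h).resolve_left fun hqp => hps ?_,
      (dvd_mul_of_dvd_right · p)⟩
    rwa [← (Nat.prime_dvd_prime_iff_eq (hs q hq) hp).1 hqp]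
  have hu (m : ℕ) : _root_.sieve s 1 (p * m) = _root_.sieve s (1 : ℕ → R) m :=
    if_congr (exists_congr fun q => and_congr_right fun hq => hdvd hq m) rfl rfl
  convert hf.mul_left_of_invariant hp.ne_zero hu using 2
  simp [_root_.sieve]

theorem HeckeRelation.sieve_singleton {f : ℕ → R} {p : ℕ} {a b : R}
    (hf : HeckeRelation f p a b) (hp : p ≠ 0) (m : ℕ) :
    _root_.sieve {p} f m = f m - a * dilate p f m + b * dilate p (dilate p f) m := by
  by_cases h : p ∣ m
  · obtain ⟨m, rfl⟩ := h
    simp [_root_.sieve, dilate_mul hp, hf m]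
  · simp [_root_.sieve, dilate_of_not_dvd h, h]

theorem HasMean.sieve_singleton {f : ℕ → ℝ} {μ : ℝ} (hμ : HasMean f μ) {p : ℕ} (hp : p ≠ 0)
    {a b : ℝ} (hf : HeckeRelation f p a b) :
    HasMean (sieve {p} f) (μ * (1 - a * (1 / p) + b * (1 / p) ^ 2)) := by
  have h := (hμ.add ((hμ.dilate hp).const_smul (-a))).add
    (((hμ.dilate hp).dilate hp).const_smul b)
  simp only [smul_eq_mul] at h
  convert h.congr fun m _ => ?_ using 1
  · ring
  · rw [hf.sieve_singleton hp]
    ring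

theorem LSeriesHasSum_sieve {f : ℕ → ℂ} {s : ℂ} (hfs : LSeriesSummable f s) {a b : ℕ → ℂ}
    (hf : ∀ p, p.Prime → HeckeRelation f p (a p) (b p)) {P : Finset ℕ} (hP : ∀ p ∈ P, p.Prime) :
    LSeriesHasSum (sieve P f) s
      (LSeries f s * ∏ p ∈ P, (1 - a p * (p : ℂ) ^ (-s) + b p * ((p : ℂ) ^ (-s)) ^ 2)) := by
  induction P using Finset.induction_on with
  | empty => simpa [sieve_empty] using hfs.LSeriesHasSum
  | insert p P hpP ih =>
    have hpp : p.Prime := hP p (mem_insert_self p P)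
    have hP' : ∀ q ∈ P, q.Prime := fun q hq => hP q (mem_insert_of_mem hq)
    have h0 := ih hP'
    have h1 := LSeriesHasSum_dilate h0 hpp.ne_zero
    have h2 := LSeriesHasSum_dilate h1 hpp.ne_zero
    have hH := ((hf p hpp).sieve hpp hP' hpP).sieve_singleton hpp.ne_zero
    rw [sieve_insert, prod_insert hpP]
    convert (h0.sub (h1.smul (a p))).add (h2.smul (b p)) using 1
    · exact funext hH
    · ring

theorem tendsto_LSeries_mul_prod_primesBelow {f : ℕ → ℂ} {s : ℂ} (hfs : LSeriesSummable f s)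
    {a b : ℕ → ℂ} (hf : ∀ p, p.Prime → HeckeRelation f p (a p) (b p)) :
    Tendsto (fun N : ℕ => LSeries f s *
        ∏ p ∈ N.primesBelow, (1 - a p * (p : ℂ) ^ (-s) + b p * ((p : ℂ) ^ (-s)) ^ 2))
      atTop (𝓝 (f 1)) := by
  have hprime (N : ℕ) : ∀ p ∈ N.primesBelow, p.Prime := fun p => Nat.prime_of_mem_primesBelow
  have hterm (m : ℕ) : ∀ᶠ N in atTop,
      LSeries.term (sieve (Nat.primesBelow N) f) s m = if m = 1 then f 1 else 0 := by
    filter_upwards [eventually_gt_atTop m] with N hN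
    rcases eq_or_ne m 0 with rfl | hm0
    · simp
    rcases eq_or_ne m 1 with rfl | hm1
    · have : 1 ∉ N.primesBelow := fun h => Nat.not_prime_one (hprime N 1 h)
      simp [sieve, this]
    · have : ∃ p ∈ N.primesBelow, p ∣ m := ⟨m.minFac, Nat.mem_primesBelow.2
        ⟨(Nat.minFac_le hm0.bot_lt).trans_lt hN, Nat.minFac_prime hm1⟩, m.minFac_dvd⟩
      simp [LSeries.term_def, sieve, this, hm1]
  have hdom (N m : ℕ) :
      ‖LSeries.term (sieve (Nat.primesBelow N) f) s m‖ ≤ ‖LSeries.term f s m‖ :=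
    LSeries.norm_term_le s <| by
      unfold sieve
      split_ifs <;> simp
  have h := tendsto_tsum_of_dominated_convergence hfs.norm
    (fun m => tendsto_nhds_of_eventually_eq (hterm m)) (Eventually.of_forall hdom)
  rw [tsum_ite_eq] at h
  exact h.congr fun N => (LSeriesHasSum_sieve hfs hf (hprime N)).LSeries_eq

end Hecke

section GaussianIntegers

theorem mem_latticeCircle {n : ℕ} {u : ℤ × ℤ} :
    u ∈ latticeCircle n ↔ u.1 ^ 2 + u.2 ^ 2 = (n : ℤ) := by
  simp only [latticeCircle, mem_filter, mem_product, mem_Icc, ← abs_le, and_iff_right_iff_imp]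
  intro h
  constructor <;> nlinarith [Int.le_self_sq |u.1|, Int.le_self_sq |u.2|, sq_abs u.1, sq_abs u.2,
    sq_nonneg u.1, sq_nonneg u.2]

/-- The Gaussian integers of norm `n`, that is, `latticeCircle n` as a subset of `ℤ[i]`. -/
noncomputable def gaussianSphere (n : ℕ) : Finset GaussianInt :=
  (latticeCircle n).map
    ⟨fun u => ⟨u.1, u.2⟩, fun _ _ h => Prod.ext (congrArg Zsqrtd.re h) (congrArg Zsqrtd.im h)⟩

theorem mem_gaussianSphere {n : ℕ} {z : GaussianInt} : z ∈ gaussianSphere n ↔ z.norm = n := by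
  have hz : z.norm = z.re ^ 2 + z.im ^ 2 := by rw [Zsqrtd.norm_def]; ring
  rw [gaussianSphere, Finset.mem_map, hz]
  refine ⟨?_, fun h => ⟨(z.re, z.im), mem_latticeCircle.2 h, rfl⟩⟩
  rintro ⟨u, hu, rfl⟩
  exact mem_latticeCircle.1 hu

theorem sum_gaussianSphere {M : Type*} [AddCommMonoid M] (n : ℕ) (f : GaussianInt → M) :
    ∑ z ∈ gaussianSphere n, f z = ∑ u ∈ latticeCircle n, f ⟨u.1, u.2⟩ :=
  sum_map _ _ _

/-- The sum of `F` over the Gaussian integers of norm `n`: `normSum F` is the coefficient sequence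
of the Hecke `L`-series `∑ F(z) N(z) ^ (-s)`. -/
noncomputable def normSum (F : GaussianInt →* ℂ) (n : ℕ) : ℂ :=
  ∑ z ∈ gaussianSphere n, F z

theorem normSum_one (n : ℕ) : normSum 1 n = latticeR n := by
  simp [normSum, gaussianSphere, latticeR]

theorem normSum_eq_zero_of_apply_I_ne_one {F : GaussianInt →* ℂ} (hF : F ⟨0, 1⟩ ≠ 1) (n : ℕ) :
    normSum F n = 0 := by
  have hrot : F ⟨0, 1⟩ * normSum F n = normSum F n := by
    rw [normSum, mul_sum]
    refine sum_nbij' (⟨0, 1⟩ * ·) (⟨0, -1⟩ * ·) ?_ ?_ ?_ ?_ fun z _ => (map_mul F _ z).symm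
    · exact fun z hz => mem_gaussianSphere.2 <| by
        rw [Zsqrtd.norm_mul, mem_gaussianSphere.1 hz, Zsqrtd.norm_def]; simp
    · exact fun z hz => mem_gaussianSphere.2 <| by
        rw [Zsqrtd.norm_mul, mem_gaussianSphere.1 hz, Zsqrtd.norm_def]; simp
    all_goals exact fun z _ => by ext <;> simp
  exact (mul_left_eq_self₀.1 hrot).resolve_left hF

theorem normSum_apply_one {F : GaussianInt →* ℂ} (hI : F ⟨0, 1⟩ = 1) : normSum F 1 = 4 := by
  have hcircle : latticeCircle 1 = {(1, 0), (-1, 0), (0, 1), (0, -1)} := by decide +kernel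
  have hneg : F ⟨-1, 0⟩ = 1 := by
    rw [show (⟨-1, 0⟩ : GaussianInt) = ⟨0, 1⟩ * ⟨0, 1⟩ by ext <;> simp, map_mul, hI, one_mul]
  have hnegI : F ⟨0, -1⟩ = 1 := by
    rw [show (⟨0, -1⟩ : GaussianInt) = ⟨-1, 0⟩ * ⟨0, 1⟩ by ext <;> simp, map_mul, hI, hneg, one_mul]
  have hone : F ⟨1, 0⟩ = 1 := map_one F
  simp only [normSum, sum_gaussianSphere, hcircle]
  simp [hI, hneg, hnegI, hone]
  norm_num

open Classical in
theorem sum_gaussianSphere_filter_dvd (F : GaussianInt →* ℂ) {π : GaussianInt} {n : ℕ}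
    (hπ : π.norm = n) (hn : n ≠ 0) (m : ℕ) :
    ∑ z ∈ gaussianSphere (n * m) with π ∣ z, F z = F π * normSum F m := by
  have hπ0 : π ≠ 0 := by
    rintro rfl
    exact hn (by exact_mod_cast hπ.symm.trans Zsqrtd.norm_zero)
  rw [normSum, mul_sum]
  symm
  refine sum_of_injOn (π * ·) (mul_right_injective₀ hπ0).injOn (fun z hz => ?_)
    (fun z hz hzπ => ?_) fun z _ => (map_mul F π z).symm
  · simp_all [mem_gaussianSphere, Zsqrtd.norm_mul]
  · obtain ⟨hz, w, rfl⟩ := mem_filter.1 hz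
    refine (hzπ ⟨w, mem_gaussianSphere.2 ?_, rfl⟩).elim
    simpa [mem_gaussianSphere, Zsqrtd.norm_mul, hπ, hn] using hz

open Classical in
theorem sum_gaussianSphere_filter_natCast_dvd (F : GaussianInt →* ℂ) {p : ℕ} (hp : p ≠ 0)
    (m : ℕ) :
    ∑ z ∈ gaussianSphere (p * m) with (p : GaussianInt) ∣ z, F z =
      F p * dilate p (normSum F) m := by
  by_cases h : p ∣ m
  · obtain ⟨m, rfl⟩ := h
    rw [dilate_mul hp, ← mul_assoc]
    exact sum_gaussianSphere_filter_dvd F (by simp [Zsqrtd.norm_natCast]) (mul_ne_zero hp hp) m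
  · rw [dilate_of_not_dvd h, mul_zero]
    refine sum_eq_zero fun z hz => (h ?_).elim
    obtain ⟨hz, w, rfl⟩ := mem_filter.1 hz
    have hpm : (p : ℤ) * (p * w.norm) = p * m := by
      simpa [mem_gaussianSphere, Zsqrtd.norm_mul, Zsqrtd.norm_natCast, mul_assoc] using hz
    exact Int.natCast_dvd_natCast.1 ⟨w.norm, (mul_left_cancel₀ (Nat.cast_ne_zero.2 hp) hpm).symm⟩

theorem prime_of_norm_eq_prime {p : ℕ} (hp : p.Prime) {π : GaussianInt} (hπ : π.norm = p) :
    Prime π := by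
  refine Irreducible.prime ⟨fun hu => ?_, fun a b hab => ?_⟩
  · have hone : π.norm = 1 := (Zsqrtd.norm_eq_one_iff' (by simp) π).2 hu
    exact hp.one_lt.ne' (by exact_mod_cast hπ.symm.trans hone)
  · have hmul : a.norm.natAbs * b.norm.natAbs = p := by
      rw [← Int.natAbs_mul, ← Zsqrtd.norm_mul, ← hab, hπ, Int.natAbs_natCast]
    rw [← Zsqrtd.norm_eq_one_iff, ← Zsqrtd.norm_eq_one_iff]
    exact (Nat.prime_mul_iff.1 (hmul ▸ hp)).elim (fun h => .inr h.2) fun h => .inl h.2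

theorem exists_norm_eq_of_mod_four_eq_one {p : ℕ} (hp : p.Prime) (hp1 : p % 4 = 1) :
    ∃ π : GaussianInt, π.norm = p := by
  have : Fact p.Prime := ⟨hp⟩
  obtain ⟨a, b, hab⟩ := Nat.Prime.sq_add_sq (p := p) (by omega)
  refine ⟨⟨a, b⟩, ?_⟩
  rw [Zsqrtd.norm_def, ← hab]
  push_cast
  ring

theorem dvd_or_star_dvd_of_mem_gaussianSphere {p : ℕ} {q z : GaussianInt} (hq : Prime q)
    (hqp : q ∣ (p : GaussianInt)) {m : ℕ} (hz : z ∈ gaussianSphere (p * m)) :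
    q ∣ z ∨ star q ∣ z := by
  have hnorm : q ∣ z * star z := by
    rw [← Zsqrtd.norm_eq_mul_conj, mem_gaussianSphere.1 hz]
    exact hqp.trans ⟨m, by push_cast; rfl⟩
  refine (hq.dvd_mul.1 hnorm).imp_right fun ⟨w, hw⟩ => ⟨star w, ?_⟩
  rw [← star_mul', ← hw, star_star]

theorem natCast_dvd_of_dvd_of_star_dvd {p : ℕ} (hp : p.Prime) (hp2 : p ≠ 2) {π z : GaussianInt}
    (hπ : π.norm = p) (h : π ∣ z) (hstar : star π ∣ z) : (p : GaussianInt) ∣ z := by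
  have hmul : (p : GaussianInt) = π * star π := by
    rw [← Zsqrtd.norm_eq_mul_conj, hπ, Int.cast_natCast]
  have hπp : Prime π := prime_of_norm_eq_prime hp hπ
  obtain ⟨w, rfl⟩ := hstar
  rcases hπp.dvd_mul.1 h with ⟨v, hv⟩ | ⟨v, rfl⟩
  · -- `π ∣ star π` makes `π` a divisor of `2 re π`, so `p ∣ re π` and `p ^ 2 ∣ p`.
    have hre : (p : ℤ) ∣ 4 * π.re ^ 2 := by
      have hsum : (⟨2 * π.re, 0⟩ : GaussianInt) = π * (1 + v) := by
        rw [mul_add, mul_one, ← hv]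
        ext <;> simp [two_mul]
      refine ⟨(1 + v).norm, ?_⟩
      rw [← hπ, ← Zsqrtd.norm_mul, ← hsum, Zsqrtd.norm_def]
      ring
    have hp' : Prime (p : ℤ) := Nat.prime_iff_prime_int.1 hp
    have hpre : (p : ℤ) ∣ π.re := by
      refine hp'.dvd_of_dvd_pow ((hp'.dvd_mul.1 hre).resolve_left fun h4 => hp2 ?_)
      have : p ∣ 2 ^ 2 := by exact_mod_cast h4
      exact (Nat.prime_dvd_prime_iff_eq hp Nat.prime_two).1 (hp.dvd_of_dvd_pow this)
    have hnorm : π.re ^ 2 + π.im ^ 2 = p := by rw [← hπ, Zsqrtd.norm_def]; ring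
    have hpim : (p : ℤ) ∣ π.im := hp'.dvd_of_dvd_pow (n := 2) <|
      (Int.dvd_add_right (dvd_pow hpre two_ne_zero)).1 (hnorm ▸ dvd_rfl)
    have hsq : (p : ℤ) ^ 2 ∣ π.re ^ 2 + π.im ^ 2 :=
      dvd_add (pow_dvd_pow_of_dvd hpre 2) (pow_dvd_pow_of_dvd hpim 2)
    have hle : p ^ 2 ≤ p := Nat.le_of_dvd hp.pos (by exact_mod_cast hnorm ▸ hsq)
    nlinarith [hp.two_le]
  · exact ⟨v, by rw [hmul]; ring⟩

theorem heckeRelation_normSum_of_norm_eq (F : GaussianInt →* ℂ) {p : ℕ} (hp : p.Prime)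
    (hp2 : p ≠ 2) {π : GaussianInt} (hπ : π.norm = p) :
    HeckeRelation (normSum F) p (F π + F (star π)) (F p) := by
  classical
  intro m
  have hmul : (p : GaussianInt) = π * star π := by
    rw [← Zsqrtd.norm_eq_mul_conj, hπ, Int.cast_natCast]
  have hor : ∀ z ∈ gaussianSphere (p * m), π ∣ z ∨ star π ∣ z := fun z =>
    dvd_or_star_dvd_of_mem_gaussianSphere (prime_of_norm_eq_prime hp hπ)
      (hmul ▸ dvd_mul_right π _)
  have hand : ∀ z ∈ gaussianSphere (p * m), (p : GaussianInt) ∣ z ↔ π ∣ z ∧ star π ∣ z :=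
    fun z _ =>
      ⟨fun h => ⟨.trans ⟨star π, hmul⟩ h, .trans ⟨π, hmul.trans (mul_comm _ _)⟩ h⟩,
        fun h => natCast_dvd_of_dvd_of_star_dvd hp hp2 hπ h.1 h.2⟩
  have hincl_excl := sum_union_inter (s₁ := {z ∈ gaussianSphere (p * m) | π ∣ z})
    (s₂ := {z ∈ gaussianSphere (p * m) | star π ∣ z}) (f := F)
  rw [← filter_or, ← filter_and, filter_true_of_mem hor, ← filter_congr hand,
    sum_gaussianSphere_filter_natCast_dvd F hp.ne_zero,
    sum_gaussianSphere_filter_dvd F hπ hp.ne_zero,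
    sum_gaussianSphere_filter_dvd F ((Zsqrtd.norm_conj π).trans hπ) hp.ne_zero] at hincl_excl
  rw [normSum, eq_sub_of_add_eq hincl_excl, add_mul]

theorem heckeRelation_normSum_two {F : GaussianInt →* ℂ} :
    HeckeRelation (normSum F) 2 (F ⟨1, 1⟩) 0 := by
  classical
  intro m
  have hnorm : (⟨1, 1⟩ : GaussianInt).norm = (2 : ℕ) := by rw [Zsqrtd.norm_def]; norm_num
  have hdvd : ∀ z ∈ gaussianSphere (2 * m), (⟨1, 1⟩ : GaussianInt) ∣ z := fun z hz => by
    refine (dvd_or_star_dvd_of_mem_gaussianSphere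
      (prime_of_norm_eq_prime Nat.prime_two hnorm) ⟨⟨1, -1⟩, ?_⟩ hz).elim id fun h => ?_
    · ext <;> simp
    · exact .trans ⟨⟨0, -1⟩, by ext <;> simp⟩ h
  rw [← sum_gaussianSphere_filter_dvd F hnorm two_ne_zero, filter_true_of_mem hdvd]
  rw [zero_mul, sub_zero, normSum]

theorem heckeRelation_normSum_of_mod_four_eq_three (F : GaussianInt →* ℂ) {p : ℕ} (hp : p.Prime)
    (hp3 : p % 4 = 3) : HeckeRelation (normSum F) p 0 (-F p) := by
  classical
  have : Fact p.Prime := ⟨hp⟩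
  intro m
  have hdvd : ∀ z ∈ gaussianSphere (p * m), (p : GaussianInt) ∣ z := fun z hz => by
    simpa using dvd_or_star_dvd_of_mem_gaussianSphere
      (GaussianInt.prime_of_nat_prime_of_mod_four_eq_three p hp3) dvd_rfl hz
  rw [zero_mul, zero_sub, neg_mul, neg_neg, ← sum_gaussianSphere_filter_natCast_dvd F hp.ne_zero,
    filter_true_of_mem hdvd, normSum]

theorem heckeRelation_normSum {F : GaussianInt →* ℂ} (hI : F ⟨0, 1⟩ = 1) {p : ℕ} (hp : p.Prime) :
    HeckeRelation (normSum F) p (normSum F p / 4) ((ZMod.χ₄ p : ℤ) * F p) := by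
  have hself {a b : ℂ} (h : HeckeRelation (normSum F) p a b) : normSum F p / 4 = a := by
    rw [h.apply_self hp.ne_one, normSum_apply_one hI]
    ring
  rcases hp.eq_two_or_odd with rfl | hodd
  · have h := heckeRelation_normSum_two (F := F)
    rw [hself h]
    convert h
    rw [show ZMod.χ₄ (2 : ℕ) = 0 by decide, Int.cast_zero, zero_mul]
  · rcases Nat.odd_mod_four_iff.1 hodd with hp1 | hp3
    · obtain ⟨π, hπ⟩ := exists_norm_eq_of_mod_four_eq_one hp hp1
      have h := heckeRelation_normSum_of_norm_eq F hp (by omega) hπ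
      rwa [hself h, ZMod.χ₄_nat_one_mod_four hp1, Int.cast_one, one_mul]
    · have h := heckeRelation_normSum_of_mod_four_eq_three F hp hp3
      rwa [hself h, ZMod.χ₄_nat_three_mod_four hp3, Int.cast_neg, Int.cast_one, neg_one_mul]

end GaussianIntegers

section RiemannSums

/-- The point `h ζ` of the lattice of mesh `h`. -/
noncomputable def meshPoint (h : ℝ) (ζ : ℤ × ℤ) : ℝ × ℝ :=
  (h * ζ.1, h * ζ.2)

/-- The index of the mesh cell `h ζ + [0, h)²` containing `w`. -/
noncomputable def meshFloor (h : ℝ) (w : ℝ × ℝ) : ℤ × ℤ :=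
  (⌊w.1 / h⌋, ⌊w.2 / h⌋)

theorem measurable_meshFloor (h : ℝ) : Measurable (meshFloor h) := by
  unfold meshFloor
  fun_prop

theorem dist_meshPoint_meshFloor_le {h : ℝ} (hh : 0 < h) (w : ℝ × ℝ) :
    dist (meshPoint h (meshFloor h w)) w ≤ h := by
  have hcoord (x : ℝ) : dist (h * ⌊x / h⌋) x ≤ h := by
    rw [dist_comm, Real.dist_eq, show x - h * ⌊x / h⌋ = h * Int.fract (x / h) by
      rw [Int.fract, mul_sub, mul_div_cancel₀ _ hh.ne'], abs_of_nonneg (by positivity)]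
    exact mul_le_of_le_one_right hh.le (Int.fract_lt_one _).le
  exact max_le (hcoord w.1) (hcoord w.2)

theorem volume_meshFloor_preimage_singleton {h : ℝ} (hh : 0 < h) (ζ : ℤ × ℤ) :
    volume (meshFloor h ⁻¹' {ζ}) = ENNReal.ofReal (h ^ 2) := by
  have hcell (a : ℤ) : {x : ℝ | ⌊x / h⌋ = a} = Set.Ico (h * a) (h * a + h) := by
    ext x
    rw [Set.mem_ofPred_eq, Int.floor_eq_iff, le_div_iff₀' hh, div_lt_iff₀' hh, mul_add_one,
      Set.mem_Ico]
  have hprod : meshFloor h ⁻¹' {ζ} =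
      Set.Ico (h * ζ.1) (h * ζ.1 + h) ×ˢ Set.Ico (h * ζ.2) (h * ζ.2 + h) := by
    ext w
    simp only [← hcell, meshFloor, Set.mem_preimage, Set.mem_singleton_iff, Prod.ext_iff,
      Set.mem_prod, Set.mem_ofPred_eq]
  rw [hprod, Measure.volume_eq_prod, Measure.prod_prod, Real.volume_Ico, Real.volume_Ico,
    add_sub_cancel_left, add_sub_cancel_left, ← ENNReal.ofReal_mul hh.le, sq]

theorem map_meshFloor_volume {h : ℝ} (hh : 0 < h) :
    Measure.map (meshFloor h) volume = ENNReal.ofReal (h ^ 2) • Measure.count :=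
  Measure.ext_of_singleton fun ζ => by
    rw [Measure.map_apply (measurable_meshFloor h) (measurableSet_singleton ζ),
      volume_meshFloor_preimage_singleton hh, Measure.smul_apply, Measure.count_singleton,
      smul_eq_mul, mul_one]

variable {E : Type*} [NormedAddCommGroup E] [NormedSpace ℝ E] [CompleteSpace E]

theorem setIntegral_comp_meshFloor {h : ℝ} (hh : 0 < h) (s : Finset (ℤ × ℤ)) (f : ℤ × ℤ → E) :
    ∫ w in meshFloor h ⁻¹' s, f (meshFloor h w) = h ^ 2 • ∑ ζ ∈ s, f ζ := by
  rw [← setIntegral_map s.measurableSet StronglyMeasurable.of_discrete.aestronglyMeasurable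
    (measurable_meshFloor h).aemeasurable, map_meshFloor_volume hh, Measure.restrict_smul,
    integral_smul_measure, ENNReal.toReal_ofReal (sq_nonneg h), setIntegral_finset]
  · simp
  · rw [← (s : Set (ℤ × ℤ)).biUnion_of_singleton]
    simp

theorem tendsto_sq_smul_sum_meshPoint {A : Set (ℝ × ℝ)} (hA : Bornology.IsBounded A)
    (hfr : volume (frontier A) = 0) {φ : ℝ × ℝ → E} {C : ℝ} (hφ : ContinuousOn φ A)
    (hC : ∀ w ∈ A, ‖φ w‖ ≤ C) {s : ℝ → Finset (ℤ × ℤ)}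
    (hs : ∀ h > 0, ∀ ζ, ζ ∈ s h ↔ meshPoint h ζ ∈ A) :
    Tendsto (fun h => h ^ 2 • ∑ ζ ∈ s h, φ (meshPoint h ζ)) (𝓝[>] 0) (𝓝 (∫ w in A, φ w)) := by
  set S := Metric.cthickening 1 A
  have hS : volume S ≠ ⊤ := hA.cthickening.measure_lt_top.ne
  have hmesh : ∀ᶠ h : ℝ in 𝓝[>] 0, 0 < h ∧ h ≤ 1 := by
    filter_upwards [Ioc_mem_nhdsGT one_pos] with h hh using hh
  have hlim : Tendsto (fun h => ∫ w, A.indicator φ (meshPoint h (meshFloor h w))) (𝓝[>] 0)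
      (𝓝 (∫ w, A.indicator φ w)) := by
    refine tendsto_integral_filter_of_dominated_convergence (S.indicator fun _ => |C|)
      (.of_forall fun h => ?_) ?_ ?_ ?_
    · exact (StronglyMeasurable.of_discrete (f := fun ζ => A.indicator φ (meshPoint h ζ))
        |>.comp_measurable (measurable_meshFloor h)).aestronglyMeasurable
    · filter_upwards [hmesh] with h ⟨hh, hh1⟩
      refine .of_forall fun w => ?_
      by_cases hw : meshPoint h (meshFloor h w) ∈ A
      · have hwS : w ∈ S := Metric.mem_cthickening_of_dist_le w _ 1 A hw <| by
          rw [dist_comm]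
          exact (dist_meshPoint_meshFloor_le hh w).trans hh1
        rw [Set.indicator_of_mem hw, Set.indicator_of_mem hwS]
        exact (hC _ hw).trans (le_abs_self C)
      · rw [Set.indicator_of_notMem hw, norm_zero]
        exact Set.indicator_nonneg (fun _ _ => abs_nonneg C) w
    · exact (integrableOn_const hS).integrable_indicator Metric.isClosed_cthickening.measurableSet
    · filter_upwards [compl_mem_ae_iff.2 hfr] with w hw
      refine ((hφ.mono interior_subset).continuousAt_indicator hw).tendsto.comp ?_
      rw [tendsto_iff_dist_tendsto_zero]
      refine squeeze_zero' (.of_forall fun _ => dist_nonneg) ?_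
        (tendsto_nhdsWithin_of_tendsto_nhds tendsto_id)
      filter_upwards [hmesh] with h hh using dist_meshPoint_meshFloor_le hh.1 w
  rw [integral_indicator₀ (nullMeasurableSet_of_null_frontier hfr)] at hlim
  refine hlim.congr' ?_
  filter_upwards [hmesh] with h ⟨hh, _⟩
  rw [← setIntegral_comp_meshFloor hh (s h) fun ζ => φ (meshPoint h ζ),
    ← integral_indicator ((measurable_meshFloor h) (s h).measurableSet)]
  refine integral_congr_ae (.of_forall fun w => ?_)
  classical
  simp only [Set.indicator_apply, Set.mem_preimage, mem_coe, hs h hh]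

end RiemannSums

section LatticeDiscs

/-- The closed Euclidean disc of radius `|R|` in `ℝ × ℝ`, whose own norm is the sup norm. -/
def disc (R : ℝ) : Set (ℝ × ℝ) :=
  {w | w.1 ^ 2 + w.2 ^ 2 ≤ R ^ 2}

theorem disc_eq_preimage_closedBall {R : ℝ} (hR : 0 ≤ R) :
    disc R = Complex.measurableEquivRealProd.symm ⁻¹' Metric.closedBall 0 R := by
  ext w
  rw [Set.mem_preimage, mem_closedBall_zero_iff, ← sq_le_sq₀ (norm_nonneg _) hR,
    Complex.sq_norm, Complex.normSq_apply, ← sq, ← sq]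
  rfl

theorem isBounded_disc (R : ℝ) : Bornology.IsBounded (disc R) :=
  isBounded_iff_forall_norm_le.2 ⟨|R|, fun w hw => max_le
      (sq_le_sq.1 ((le_add_of_nonneg_right (sq_nonneg w.2)).trans hw))
      (sq_le_sq.1 ((le_add_of_nonneg_left (sq_nonneg w.1)).trans hw))⟩

theorem isClosed_disc (R : ℝ) : IsClosed (disc R) :=
  isClosed_le (by fun_prop) continuous_const

theorem volume_frontier_disc (R : ℝ) : volume (frontier (disc R)) = 0 :=
  Convex.addHaar_frontier volume <| by
    have hsq : ConvexOn ℝ Set.univ fun x : ℝ => x ^ 2 := even_two.convexOn_pow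
    simpa [disc] using ((hsq.comp_linearMap (LinearMap.fst ℝ ℝ ℝ)).add
      (hsq.comp_linearMap (LinearMap.snd ℝ ℝ ℝ))).convex_le (R ^ 2)

theorem setIntegral_disc_eq_setIntegral_closedBall {E : Type*} [NormedAddCommGroup E]
    [NormedSpace ℝ E] (φ : ℂ → E) {R : ℝ} (hR : 0 ≤ R) :
    ∫ w in disc R, φ (w.1 + w.2 * Complex.I) = ∫ z in Metric.closedBall (0 : ℂ) R, φ z := by
  rw [disc_eq_preimage_closedBall hR,
    ← Complex.volume_preserving_equiv_real_prod.symm.setIntegral_preimage_emb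
      Complex.measurableEquivRealProd.symm.measurableEmbedding]
  simp [Complex.mk_eq_add_mul_I]

/-- The nonzero lattice points of square norm at most `M`. -/
noncomputable def puncturedLatticeDisc (M : ℕ) : Finset (ℤ × ℤ) :=
  (Icc 1 M).biUnion latticeCircle

theorem sum_puncturedLatticeDisc {E : Type*} [AddCommMonoid E] (M : ℕ) (f : ℤ × ℤ → E) :
    ∑ ζ ∈ puncturedLatticeDisc M, f ζ = ∑ m ∈ Icc 1 M, ∑ ζ ∈ latticeCircle m, f ζ :=
  sum_biUnion fun m _ n _ hmn => disjoint_left.2 fun ζ hm hn => hmn <| by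
    exact_mod_cast (mem_latticeCircle.1 hm).symm.trans (mem_latticeCircle.1 hn)

theorem mem_puncturedLatticeDisc_floor {h : ℝ} (hh : 0 < h) (R : ℝ) {ζ : ℤ × ℤ} :
    ζ ∈ puncturedLatticeDisc ⌊(R / h) ^ 2⌋₊ ↔ meshPoint h ζ ∈ disc R \ {0} := by
  have hdisc : meshPoint h ζ ∈ disc R ↔ ((ζ.1 ^ 2 + ζ.2 ^ 2 : ℤ) : ℝ) ≤ (R / h) ^ 2 := by
    rw [div_pow, le_div_iff₀' (by positivity), disc, Set.mem_ofPred_eq, meshPoint]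
    push_cast
    rw [mul_add, mul_pow, mul_pow]
  have hzero : meshPoint h ζ = 0 ↔ ζ.1 ^ 2 + ζ.2 ^ 2 = 0 := by
    rw [add_eq_zero_iff_of_nonneg (sq_nonneg _) (sq_nonneg _)]
    simp [meshPoint, Prod.ext_iff, hh.ne']
  obtain ⟨n, hn⟩ := Int.eq_ofNat_of_zero_le (by positivity : 0 ≤ ζ.1 ^ 2 + ζ.2 ^ 2)
  rw [Set.mem_sdiff, Set.mem_singleton_iff, hdisc, hzero, hn, Int.cast_natCast,
    ← Nat.le_floor_iff (by positivity), Nat.cast_eq_zero, puncturedLatticeDisc, mem_biUnion]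
  simp only [mem_latticeCircle, hn, Nat.cast_inj, exists_eq_right', mem_Icc, Nat.one_le_iff_ne_zero]
  exact and_comm

theorem tendsto_sq_smul_sum_latticeCircle {E : Type*} [NormedAddCommGroup E] [NormedSpace ℝ E]
    [CompleteSpace E] {φ : ℝ × ℝ → E} (hφ : ContinuousOn φ {0}ᶜ) {R C : ℝ}
    (hC : ∀ w ∈ disc R, ‖φ w‖ ≤ C) :
    Tendsto (fun h : ℝ => h ^ 2 • ∑ m ∈ Icc 1 ⌊(R / h) ^ 2⌋₊, ∑ ζ ∈ latticeCircle m,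
      φ (meshPoint h ζ)) (𝓝[>] 0) (𝓝 (∫ w in disc R, φ w)) := by
  have hfr : volume (frontier (disc R \ {0})) = 0 := by
    refine measure_mono_null (frontier_inter_subset _ _) (measure_union_null
      (measure_mono_null Set.inter_subset_left (volume_frontier_disc R))
      (measure_mono_null (Set.inter_subset_right.trans ?_) (measure_singleton 0)))
    exact frontier_compl ({0} : Set (ℝ × ℝ)) ▸ isClosed_singleton.frontier_subset
  have hint : ∫ w in disc R \ {0}, φ w = ∫ w in disc R, φ w :=
    setIntegral_congr_set (sdiff_null_ae_eq_self (measure_singleton 0))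
  simp only [← hint, ← sum_puncturedLatticeDisc]
  exact tendsto_sq_smul_sum_meshPoint ((isBounded_disc R).subset Set.sdiff_subset) hfr
    (hφ.mono fun w hw => hw.2) (fun w hw => hC w hw.1)
    fun h hh ζ => mem_puncturedLatticeDisc_floor hh R

end LatticeDiscs

section AngularCharacters

theorem hasMean_sum_gaussianSphere {E : Type*} [NormedAddCommGroup E] [NormedSpace ℝ E]
    [CompleteSpace E] {φ : ℂ → E} (hφ : ContinuousOn φ {0}ᶜ) {C : ℝ} (hC : ∀ z, ‖φ z‖ ≤ C)
    (hhom : ∀ h : ℝ, 0 < h → ∀ z : ℂ, φ (h * z) = φ z) :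
    HasMean (fun m => ∑ z ∈ gaussianSphere m, φ z) (∫ z in Metric.closedBall 0 1, φ z) := by
  have hcont : ContinuousOn (fun w : ℝ × ℝ => φ (w.1 + w.2 * Complex.I)) {0}ᶜ :=
    hφ.comp (by fun_prop) fun w hw h0 => hw <| by
      have h0 : (w.1 + w.2 * Complex.I : ℂ) = 0 := h0
      exact Prod.ext (by simpa using congrArg Complex.re h0)
        (by simpa using congrArg Complex.im h0)
  have hmesh : Tendsto (fun n : ℕ => (√n)⁻¹) atTop (𝓝[>] 0) :=
    tendsto_inv_atTop_nhdsGT_zero.comp (Real.tendsto_sqrt_atTop.comp tendsto_natCast_atTop_atTop)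
  have hlim := (tendsto_sq_smul_sum_latticeCircle hcont (R := 1) fun w _ => hC _).comp hmesh
  rw [setIntegral_disc_eq_setIntegral_closedBall φ zero_le_one] at hlim
  refine hlim.congr' ?_
  filter_upwards [eventually_gt_atTop 0] with n hn
  have hsqrt : (√n)⁻¹ ^ 2 = (n : ℝ)⁻¹ := by rw [inv_pow, Real.sq_sqrt n.cast_nonneg]
  rw [Function.comp_apply, one_div, inv_inv, Real.sq_sqrt n.cast_nonneg, Nat.floor_natCast, hsqrt]
  refine congrArg _ (sum_congr rfl fun m _ => ?_)
  rw [sum_gaussianSphere m fun z => φ z]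
  refine sum_congr rfl fun u _ => ?_
  rw [GaussianInt.toComplex_def]
  refine .trans ?_ (hhom (√n)⁻¹ (by positivity) _)
  simp only [meshPoint]
  push_cast
  ring_nf

theorem hasMean_latticeR : HasMean (fun m => (latticeR m : ℝ)) Real.pi := by
  have h := hasMean_sum_gaussianSphere (φ := fun _ => (1 : ℝ)) continuousOn_const
    (fun _ => norm_one.le) fun _ _ _ => rfl
  simpa [gaussianSphere, latticeR, measureReal_def] using h

/-- The angular character `z ↦ (z / ‖z‖) ^ k`, which is `exp (i k θ)` at argument `θ`. -/
noncomputable def angularChar (k : ℤ) : ℂ →* ℂ where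
  toFun z := (z / ‖z‖) ^ k
  map_one' := by simp
  map_mul' z w := by rw [norm_mul, Complex.ofReal_mul, mul_div_mul_comm, mul_zpow]

theorem angularChar_apply (k : ℤ) (z : ℂ) : angularChar k z = (z / ‖z‖) ^ k :=
  rfl

theorem norm_angularChar (k : ℤ) {z : ℂ} (hz : z ≠ 0) : ‖angularChar k z‖ = 1 := by
  rw [angularChar_apply, norm_zpow, norm_div, Complex.norm_real, norm_norm,
    div_self (norm_ne_zero_iff.2 hz), one_zpow]

theorem norm_angularChar_le_one (k : ℤ) (z : ℂ) : ‖angularChar k z‖ ≤ 1 := by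
  rcases eq_or_ne z 0 with rfl | hz
  · rcases eq_or_ne k 0 with rfl | hk
    · simp [angularChar_apply]
    · simp [angularChar_apply, zero_zpow k hk]
  · exact (norm_angularChar k hz).le

theorem angularChar_ofReal (k : ℤ) {x : ℝ} (hx : 0 < x) : angularChar k x = 1 := by
  rw [angularChar_apply, Complex.norm_of_nonneg hx.le,
    div_self (Complex.ofReal_ne_zero.2 hx.ne'), one_zpow]

theorem continuousOn_angularChar (k : ℤ) : ContinuousOn (angularChar k) {0}ᶜ := by
  have hnorm : ∀ z ∈ ({0}ᶜ : Set ℂ), (‖z‖ : ℂ) ≠ 0 := fun z hz =>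
    Complex.ofReal_ne_zero.2 (norm_ne_zero_iff.2 hz)
  exact (continuousOn_id.div (by fun_prop) hnorm).zpow₀ k fun z hz =>
    .inl (div_ne_zero hz (hnorm z hz))

theorem setIntegral_angularChar_eq_zero {k : ℤ} (hk : k ≠ 0) (r : ℝ) :
    ∫ z in Metric.closedBall (0 : ℂ) r, angularChar k z = 0 := by
  set c : Circle := Circle.exp (Real.pi / k)
  have hc : angularChar k c = -1 := by
    rw [angularChar_apply, Circle.norm_coe, Complex.ofReal_one, div_one, Circle.coe_exp,
      ← Complex.exp_int_mul, ← Complex.exp_pi_mul_I]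
    push_cast
    field_simp
  have hrot := (rotation c).measurePreserving.setIntegral_preimage_emb
    (rotation c).toHomeomorph.measurableEmbedding (angularChar k) (Metric.closedBall 0 r)
  simp only [rotation_apply, map_mul, hc, neg_one_mul, integral_neg,
    LinearIsometryEquiv.preimage_closedBall, map_zero] at hrot
  exact neg_eq_self.1 hrot

/-- The angular character of index `k` on the Gaussian integers. -/
noncomputable def gaussianChar (k : ℤ) : GaussianInt →* ℂ :=
  (angularChar k).comp GaussianInt.toComplex

theorem gaussianChar_apply (k : ℤ) (z : GaussianInt) : gaussianChar k z = angularChar k z :=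
  rfl

theorem gaussianChar_sq (k : ℤ) : gaussianChar k ^ 2 = gaussianChar (2 * k) :=
  MonoidHom.ext fun z => by
    rw [MonoidHom.pow_apply, gaussianChar_apply, gaussianChar_apply, angularChar_apply,
      angularChar_apply, mul_comm, zpow_mul, zpow_ofNat]

theorem hasMean_normSum_gaussianChar {k : ℤ} (hk : k ≠ 0) :
    HasMean (normSum (gaussianChar k)) 0 := by
  have h := hasMean_sum_gaussianSphere (continuousOn_angularChar k) (norm_angularChar_le_one k)
    fun h hh z => by rw [map_mul, angularChar_ofReal k hh, one_mul]
  rwa [setIntegral_angularChar_eq_zero hk] at h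

theorem angularChar_eq_exp_latticeTheta (k : ℤ) {u : ℤ × ℤ} (hu : u ≠ 0) :
    angularChar k (u.1 + u.2 * Complex.I) = Complex.exp (k * latticeTheta u * Complex.I) := by
  set z : ℂ := u.1 + u.2 * Complex.I
  have hz : z ≠ 0 := fun h => hu <| Prod.ext
    (by simpa [z] using congrArg Complex.re h) (by simpa [z] using congrArg Complex.im h)
  have harg : Complex.exp (latticeTheta u * Complex.I) = Complex.exp (z.arg * Complex.I) := by
    unfold latticeTheta
    split_ifs
    · rfl
    · push_cast
      rw [add_mul, Complex.exp_add, Complex.exp_two_pi_mul_I, mul_one]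
  rw [mul_assoc, Complex.exp_int_mul, harg, angularChar_apply]
  congr 1
  rw [div_eq_iff (Complex.ofReal_ne_zero.2 (norm_ne_zero_iff.2 hz)), mul_comm,
    Complex.norm_mul_exp_arg_mul_I]

theorem ne_zero_of_mem_latticeCircle {m : ℕ} (hm : m ≠ 0) {u : ℤ × ℤ} (hu : u ∈ latticeCircle m) :
    u ≠ 0 := by
  rintro rfl
  exact hm (by simpa using (mem_latticeCircle.1 hu).symm)

theorem normSum_gaussianChar (k : ℤ) {m : ℕ} (hm : m ≠ 0) :
    normSum (gaussianChar k) m = latticeS m k := by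
  rw [normSum, sum_gaussianSphere, latticeS]
  refine sum_congr rfl fun u hu => ?_
  rw [gaussianChar_apply, GaussianInt.toComplex_def,
    ← angularChar_eq_exp_latticeTheta k (ne_zero_of_mem_latticeCircle hm hu)]

end AngularCharacters

section EulerProducts

/-- A multiplicative function on `ℤ[i]` with values of modulus one which is trivial on the positive
integers, so that it depends on the direction of a Gaussian integer only. -/
structure IsAngular (F : GaussianInt →* ℂ) : Prop where
  norm_apply : ∀ z, z ≠ 0 → ‖F z‖ = 1
  apply_natCast : ∀ n : ℕ, n ≠ 0 → F n = 1

theorem isAngular_one : IsAngular 1 where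
  norm_apply _ _ := norm_one
  apply_natCast _ _ := rfl

theorem isAngular_gaussianChar (k : ℤ) : IsAngular (gaussianChar k) where
  norm_apply z hz := norm_angularChar k (mt GaussianInt.toComplex_eq_zero.1 hz)
  apply_natCast n hn := by
    rw [gaussianChar_apply, map_natCast, ← Complex.ofReal_natCast]
    exact angularChar_ofReal k (Nat.cast_pos.2 hn.bot_lt)

/-- For a prime `p ≡ 1 [MOD 4]` and a Gaussian integer `π` of norm `p`, the real part of `F π`; see
`IsAngular.heckeCos_eq`. -/
noncomputable def heckeCos (F : GaussianInt →* ℂ) (p : ℕ) : ℝ :=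
  (normSum F p).re / 8

/-- The reciprocal at `x = p ^ (-s)` of the Euler factor at `p` of the Dirichlet series of
`normSum F`. -/
noncomputable def eulerFactor (F : GaussianInt →* ℂ) (p : ℕ) (x : ℂ) : ℂ :=
  1 - normSum F p / 4 * x + (ZMod.χ₄ p : ℤ) * x ^ 2

/-- The quantity `(1 - Re F π) / p` at the primes `p = N π ≡ 1 [MOD 4]`: the distance of `F` from
the trivial character at `p`. -/
noncomputable def splitDefect (F : GaussianInt →* ℂ) (p : ℕ) : ℝ :=
  if p.Prime ∧ p % 4 = 1 then (1 - heckeCos F p) / p else 0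

theorem eulerFactor_of_mod_four_eq_three (F : GaussianInt →* ℂ) {p : ℕ} (hp : p.Prime)
    (hp3 : p % 4 = 3) (x : ℂ) : eulerFactor F p x = 1 - x ^ 2 := by
  rw [eulerFactor, (heckeRelation_normSum_of_mod_four_eq_three F hp hp3).apply_self hp.ne_one,
    ZMod.χ₄_nat_three_mod_four hp3]
  push_cast
  ring

theorem heckeCos_one {p : ℕ} (hp : p.Prime) (hp1 : p % 4 = 1) : heckeCos 1 p = 1 := by
  obtain ⟨π, hπ⟩ := exists_norm_eq_of_mod_four_eq_one hp hp1
  rw [heckeCos, (heckeRelation_normSum_of_norm_eq 1 hp (by omega) hπ).apply_self hp.ne_one,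
    normSum_apply_one (MonoidHom.one_apply _)]
  norm_num

theorem tendsto_LSeries_normSum_one :
    Tendsto (fun s : ℝ => (s - 1) * LSeries (normSum 1) s) (𝓝[>] 1) (𝓝 Real.pi) := by
  have h := LSeries_tendsto_sub_mul_nhds_one_of_tendsto_sum_div_and_nonneg
    (fun m => (latticeR m : ℝ)) (hasMean_latticeR.congr' (.of_forall fun n => inv_mul_eq_div _ _))
    fun _ => Nat.cast_nonneg _
  simpa [funext normSum_one] using h

namespace IsAngular

variable {F : GaussianInt →* ℂ} (hF : IsAngular F)
include hF

theorem sq : IsAngular (F ^ 2) where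
  norm_apply z hz := by rw [MonoidHom.pow_apply, norm_pow, hF.norm_apply z hz, one_pow]
  apply_natCast n hn := by rw [MonoidHom.pow_apply, hF.apply_natCast n hn, one_pow]

theorem apply_star_add_apply {z : GaussianInt} (hz : z ≠ 0) :
    F z + F (star z) = 2 * (F z).re := by
  have hnorm : ((z.norm.toNat : ℕ) : GaussianInt) = z * star z := by
    rw [← Zsqrtd.norm_eq_mul_conj, ← Int.cast_natCast,
      Int.toNat_of_nonneg (GaussianInt.norm_nonneg z)]
  have hmul : F z * F (star z) = 1 := by
    rw [← map_mul, ← hnorm, hF.apply_natCast _ (by simpa using GaussianInt.norm_pos.2 hz)]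
  have hconj : F (star z) = (starRingEnd ℂ) (F z) := by
    rw [← Complex.inv_eq_conj (hF.norm_apply z hz), eq_inv_of_mul_eq_one_right hmul]
  rw [hconj, Complex.add_conj, Complex.ofReal_mul, Complex.ofReal_ofNat]

theorem norm_normSum_le {m : ℕ} (hm : m ≠ 0) : ‖normSum F m‖ ≤ latticeR m := by
  refine (norm_sum_le_of_le _ fun z hz => (hF.norm_apply z ?_).le).trans_eq ?_
  · rintro rfl
    exact hm (by exact_mod_cast (mem_gaussianSphere.1 hz).symm.trans Zsqrtd.norm_zero)
  · simp [gaussianSphere, latticeR]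

theorem lseriesSummable_normSum {s : ℝ} (hs : 1 < s) : LSeriesSummable (normSum F) s := by
  refine LSeriesSummable_of_sum_norm_bigO (r := 1) ?_ zero_le_one (by simpa using hs)
  have hR : (fun n : ℕ => ∑ m ∈ Icc 1 n, (latticeR m : ℝ)) =O[atTop]
      fun n => (n : ℝ) ^ (1 : ℝ) := by
    refine Asymptotics.isBigO_atTop_natCast_rpow_of_tendsto_div_rpow (𝕜 := ℝ) (a := Real.pi) ?_
    exact Tendsto.congr (fun n => by simp [inv_mul_eq_div]) hasMean_latticeR
  refine .trans (.of_norm_le fun n => ?_) hR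
  rw [Real.norm_of_nonneg (by positivity)]
  exact sum_le_sum fun m hm => hF.norm_normSum_le (Nat.one_le_iff_ne_zero.1 (mem_Icc.1 hm).1)

variable (hI : F ⟨0, 1⟩ = 1)
include hI

theorem normSum_eq_mul_re {p : ℕ} (hp : p.Prime) (hp2 : p ≠ 2) {π : GaussianInt}
    (hπ : π.norm = p) : normSum F p = 8 * (F π).re := by
  have hπ0 : π ≠ 0 := (prime_of_norm_eq_prime hp hπ).ne_zero
  rw [(heckeRelation_normSum_of_norm_eq F hp hp2 hπ).apply_self hp.ne_one,
    normSum_apply_one hI, hF.apply_star_add_apply hπ0]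
  ring

theorem heckeCos_eq {p : ℕ} (hp : p.Prime) (hp2 : p ≠ 2) {π : GaussianInt} (hπ : π.norm = p) :
    heckeCos F p = (F π).re := by
  rw [heckeCos, hF.normSum_eq_mul_re hI hp hp2 hπ]
  simp

theorem normSum_eq_mul_heckeCos {p : ℕ} (hp : p.Prime) (hp1 : p % 4 = 1) :
    normSum F p = 8 * heckeCos F p := by
  obtain ⟨π, hπ⟩ := exists_norm_eq_of_mod_four_eq_one hp hp1
  have hp2 : p ≠ 2 := by omega
  rw [hF.normSum_eq_mul_re hI hp hp2 hπ, hF.heckeCos_eq hI hp hp2 hπ]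

theorem abs_heckeCos_le_one {p : ℕ} (hp : p.Prime) (hp1 : p % 4 = 1) : |heckeCos F p| ≤ 1 := by
  obtain ⟨π, hπ⟩ := exists_norm_eq_of_mod_four_eq_one hp hp1
  rw [hF.heckeCos_eq hI hp (by omega) hπ,
    ← hF.norm_apply π (prime_of_norm_eq_prime hp hπ).ne_zero]
  exact Complex.abs_re_le_norm _

theorem splitDefect_nonneg (p : ℕ) : 0 ≤ splitDefect F p := by
  unfold splitDefect
  split_ifs with hp
  · have := (abs_le.1 (hF.abs_heckeCos_le_one hI hp.1 hp.2)).2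
    exact div_nonneg (sub_nonneg.2 this) p.cast_nonneg
  · exact le_rfl

theorem eulerFactor_of_mod_four_eq_one {p : ℕ} (hp : p.Prime) (hp1 : p % 4 = 1) (x : ℝ) :
    eulerFactor F p x = ((1 - x) ^ 2 + 2 * (1 - heckeCos F p) * x : ℝ) := by
  rw [eulerFactor, hF.normSum_eq_mul_heckeCos hI hp hp1, ZMod.χ₄_nat_one_mod_four hp1]
  push_cast
  ring

theorem norm_eulerFactor_two_le {x : ℝ} (hx : 0 ≤ x) (hx2 : x ≤ 1 / 2) :
    ‖eulerFactor F 2 x‖ ≤ ‖eulerFactor 1 2 x‖ * Real.exp 2 := by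
  have heuler {G : GaussianInt →* ℂ} (hG : G ⟨0, 1⟩ = 1) (y : ℂ) :
      eulerFactor G 2 y = 1 - G ⟨1, 1⟩ * y := by
    rw [eulerFactor, heckeRelation_normSum_two.apply_self (by norm_num), normSum_apply_one hG,
      show ZMod.χ₄ (2 : ℕ) = 0 by decide]
    push_cast
    ring
  have hone : ‖eulerFactor 1 2 x‖ = 1 - x := by
    rw [heuler (MonoidHom.one_apply _), MonoidHom.one_apply, one_mul, ← Complex.ofReal_one,
      ← Complex.ofReal_sub, Complex.norm_of_nonneg (by linarith)]
  calc ‖eulerFactor F 2 x‖ ≤ 1 + x := by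
        rw [heuler hI]
        refine (norm_sub_le _ _).trans_eq ?_
        rw [norm_one, norm_mul, hF.norm_apply _ (by simp [Zsqrtd.ext_iff]), one_mul,
          Complex.norm_of_nonneg hx]
    _ ≤ (1 - x) * (2 + 1) := by linarith
    _ ≤ ‖eulerFactor 1 2 x‖ * Real.exp 2 := by
        rw [hone]
        exact mul_le_mul_of_nonneg_left (Real.add_one_le_exp 2) (by linarith)

theorem norm_eulerFactor_le_of_mod_four_eq_one {p : ℕ} (hp : p.Prime) (hp1 : p % 4 = 1) {x : ℝ}
    (hx : 0 ≤ x) (hxp : x ≤ 1 / p) :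
    ‖eulerFactor F p x‖ ≤ ‖eulerFactor 1 p x‖ * Real.exp (8 * splitDefect F p) := by
  have hc : 0 ≤ 1 - heckeCos F p :=
    sub_nonneg.2 (abs_le.1 (hF.abs_heckeCos_le_one hI hp hp1)).2
  have hp2 : (2 : ℝ) ≤ p := by exact_mod_cast hp.two_le
  have hx2 : x ≤ 1 / 2 := hxp.trans (by gcongr)
  have hfour : 1 ≤ 4 * (1 - x) ^ 2 := by nlinarith
  rw [hF.eulerFactor_of_mod_four_eq_one hI hp hp1,
    isAngular_one.eulerFactor_of_mod_four_eq_one (MonoidHom.one_apply _) hp hp1,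
    heckeCos_one hp hp1, sub_self, mul_zero, zero_mul, add_zero,
    Complex.norm_of_nonneg (by positivity), Complex.norm_of_nonneg (sq_nonneg _),
    splitDefect, if_pos ⟨hp, hp1⟩]
  calc (1 - x) ^ 2 + 2 * (1 - heckeCos F p) * x
      ≤ (1 - x) ^ 2 + 4 * (1 - x) ^ 2 * (2 * (1 - heckeCos F p) * (1 / p)) := by
        refine add_le_add_right ?_ _
        exact (mul_le_mul_of_nonneg_left hxp (by positivity)).trans
          (le_mul_of_one_le_left (by positivity) hfour)
    _ = (1 - x) ^ 2 * (8 * ((1 - heckeCos F p) / p) + 1) := by ring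
    _ ≤ _ := mul_le_mul_of_nonneg_left (Real.add_one_le_exp _) (sq_nonneg _)

theorem norm_eulerFactor_le {p : ℕ} (hp : p.Prime) {x : ℝ} (hx : 0 ≤ x) (hxp : x ≤ 1 / p) :
    ‖eulerFactor F p x‖ ≤
      ‖eulerFactor 1 p x‖ * Real.exp ((if p = 2 then 2 else 0) + 8 * splitDefect F p) := by
  rcases hp.eq_two_or_odd with rfl | hodd
  · simpa [splitDefect] using hF.norm_eulerFactor_two_le hI hx (by exact_mod_cast hxp)
  · rw [if_neg (by omega), zero_add]
    rcases Nat.odd_mod_four_iff.1 hodd with hp1 | hp3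
    · exact hF.norm_eulerFactor_le_of_mod_four_eq_one hI hp hp1 hx hxp
    · simp [eulerFactor_of_mod_four_eq_three _ hp hp3, splitDefect, hp3]

theorem prod_norm_eulerFactor_le (hsum : Summable (splitDefect F)) {s : ℝ} (hs : 1 < s)
    {P : Finset ℕ} (hP : ∀ p ∈ P, p.Prime) :
    ∏ p ∈ P, ‖eulerFactor F p ((p : ℂ) ^ (-s : ℂ))‖ ≤
      (∏ p ∈ P, ‖eulerFactor 1 p ((p : ℂ) ^ (-s : ℂ))‖) *
        Real.exp (2 + 8 * ∑' p, splitDefect F p) := by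
  calc ∏ p ∈ P, ‖eulerFactor F p ((p : ℂ) ^ (-s : ℂ))‖
      ≤ ∏ p ∈ P, ‖eulerFactor 1 p ((p : ℂ) ^ (-s : ℂ))‖ *
          Real.exp ((if p = 2 then 2 else 0) + 8 * splitDefect F p) := by
        refine prod_le_prod (fun _ _ => norm_nonneg _) fun p hp => ?_
        have hpow : (p : ℂ) ^ (-s : ℂ) = ((p : ℝ) ^ (-s) : ℝ) := by
          rw [Complex.ofReal_cpow p.cast_nonneg]
          push_cast
          rfl
        have hp1 : (1 : ℝ) ≤ p := by exact_mod_cast (hP p hp).one_lt.le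
        rw [hpow]
        refine hF.norm_eulerFactor_le hI (hP p hp) (by positivity) ?_
        rw [one_div, ← Real.rpow_neg_one]
        exact Real.rpow_le_rpow_of_exponent_le hp1 (neg_le_neg hs.le)
    _ = (∏ p ∈ P, ‖eulerFactor 1 p ((p : ℂ) ^ (-s : ℂ))‖) *
          Real.exp (∑ p ∈ P, ((if p = 2 then 2 else 0) + 8 * splitDefect F p)) := by
        rw [prod_mul_distrib, Real.exp_sum]
    _ ≤ _ := by
        rw [sum_add_distrib, ← mul_sum, sum_ite_eq']
        gcongr
        · split_ifs <;> norm_num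
        · exact hsum.sum_le_tsum _ fun p _ => hF.splitDefect_nonneg hI p

theorem tendsto_LSeries_mul_prod_eulerFactor {s : ℝ} (hs : 1 < s) :
    Tendsto (fun N : ℕ => ‖LSeries (normSum F) s‖ *
      ∏ p ∈ N.primesBelow, ‖eulerFactor F p ((p : ℂ) ^ (-s : ℂ))‖) atTop (𝓝 4) := by
  have h := (tendsto_LSeries_mul_prod_primesBelow (hF.lseriesSummable_normSum hs)
    fun p hp => heckeRelation_normSum hI hp).norm
  rw [normSum_apply_one hI, Complex.norm_ofNat] at h
  refine h.congr fun N => ?_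
  rw [norm_mul, norm_prod]
  congr 1
  refine prod_congr rfl fun p hp => ?_
  rw [hF.apply_natCast p (Nat.prime_of_mem_primesBelow hp).ne_zero, mul_one]
  rfl

theorem norm_LSeries_one_le (hsum : Summable (splitDefect F)) {s : ℝ} (hs : 1 < s) :
    ‖LSeries (normSum 1) s‖ ≤
      Real.exp (2 + 8 * ∑' p, splitDefect F p) * ‖LSeries (normSum F) s‖ := by
  have hlimF := (hF.tendsto_LSeries_mul_prod_eulerFactor hI hs).const_mul ‖LSeries (normSum 1) s‖
  have hlim1 := (isAngular_one.tendsto_LSeries_mul_prod_eulerFactor (MonoidHom.one_apply _)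
    hs).const_mul (Real.exp (2 + 8 * ∑' p, splitDefect F p) * ‖LSeries (normSum F) s‖)
  refine le_of_mul_le_mul_right (le_of_tendsto_of_tendsto' hlimF hlim1 fun N => ?_) four_pos
  calc _ = ‖LSeries (normSum 1) s‖ * ‖LSeries (normSum F) s‖ *
        ∏ p ∈ N.primesBelow, ‖eulerFactor F p ((p : ℂ) ^ (-s : ℂ))‖ := by ring
    _ ≤ ‖LSeries (normSum 1) s‖ * ‖LSeries (normSum F) s‖ * _ :=
        mul_le_mul_of_nonneg_left (hF.prod_norm_eulerFactor_le hI hsum hs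
          fun p => Nat.prime_of_mem_primesBelow) (by positivity)
    _ = _ := by ring

theorem not_summable_splitDefect (hmean : HasMean (normSum F) 0) :
    ¬ Summable (splitDefect F) := by
  intro hsum
  have hlimF : Tendsto (fun s : ℝ => (s - 1) * LSeries (normSum F) s) (𝓝[>] 1) (𝓝 0) := by
    refine LSeries_tendsto_sub_mul_nhds_one_of_tendsto_sum_div
      (hmean.congr' (.of_forall fun n => ?_)) fun s hs => hF.lseriesSummable_normSum hs
    rw [Complex.real_smul, Complex.ofReal_inv, Complex.ofReal_natCast, inv_mul_eq_div]
  have hle := le_of_tendsto_of_tendsto tendsto_LSeries_normSum_one.norm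
    (hlimF.norm.const_mul (Real.exp (2 + 8 * ∑' p, splitDefect F p))) <| by
      filter_upwards [self_mem_nhdsWithin] with s hs
      rw [norm_mul, norm_mul, mul_left_comm]
      exact mul_le_mul_of_nonneg_left (hF.norm_LSeries_one_le hI hsum hs) (norm_nonneg _)
  rw [norm_zero, mul_zero, Complex.norm_of_nonneg Real.pi_pos.le] at hle
  exact hle.not_gt Real.pi_pos

end IsAngular

end EulerProducts

section ExactDivisors

/-- The weight `∏ c p` over the elements `p` of `P` dividing `m` exactly once. -/
noncomputable def exactDivisorWeight (c : ℕ → ℝ) (P : Finset ℕ) (m : ℕ) : ℝ :=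
  ∏ p ∈ P, if p ∣ m ∧ ¬ p * p ∣ m then c p else 1

theorem exactDivisorWeight_insert (c : ℕ → ℝ) {p : ℕ} {P : Finset ℕ} (hp : p ∉ P) (m : ℕ) :
    exactDivisorWeight c (insert p P) m =
      (if p ∣ m ∧ ¬ p * p ∣ m then c p else 1) * exactDivisorWeight c P m :=
  prod_insert hp

theorem exactDivisorWeight_mul_left (c : ℕ → ℝ) {P : Finset ℕ} (hP : ∀ p ∈ P, p.Prime) {q : ℕ}
    (hq : q.Prime) (hqP : q ∉ P) (m : ℕ) :
    exactDivisorWeight c P (q * m) = exactDivisorWeight c P m := by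
  refine prod_congr rfl fun p hp => ?_
  have hpq : p.Coprime q := (Nat.coprime_primes (hP p hp) hq).2 fun h => hqP (h ▸ hp)
  simp only [hpq.dvd_mul_left, (hpq.mul_left hpq).dvd_mul_left]

theorem HeckeRelation.ite_exact_dvd {f : ℕ → ℝ} {p : ℕ} {a b : ℝ} (hf : HeckeRelation f p a b)
    (hp : p ≠ 0) (m : ℕ) :
    (if p ∣ m ∧ ¬ p * p ∣ m then f m else 0) = a * dilate p (_root_.sieve {p} f) m := by
  by_cases h : p ∣ m
  · obtain ⟨n, rfl⟩ := h
    simp only [dilate_mul hp, Nat.mul_dvd_mul_iff_left hp.bot_lt]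
    by_cases hn : p ∣ n
    · simp [_root_.sieve, hn]
    · simp [_root_.sieve, hn, hf.apply_mul_of_not_dvd hn]
  · rw [dilate_of_not_dvd h, mul_zero, if_neg fun h' => h h'.1]

theorem HasMean.exactDivisorWeight_mul {f : ℕ → ℝ} {μ : ℝ} (hμ : HasMean f μ) (c : ℕ → ℝ)
    {P : Finset ℕ} (hP : ∀ p ∈ P, p.Prime) (hf : ∀ p ∈ P, HeckeRelation f p 2 1) :
    HasMean (fun m => exactDivisorWeight c P m * f m)
      (μ * ∏ p ∈ P, (1 - (1 - c p) * (2 / p) * (1 - 1 / p) ^ 2)) := by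
  induction P using Finset.induction_on with
  | empty => simpa [exactDivisorWeight] using hμ
  | insert p P hpP ih =>
    have hp : p.Prime := hP p (mem_insert_self p P)
    have hP' : ∀ q ∈ P, q.Prime := fun q hq => hP q (mem_insert_of_mem hq)
    have hμ' := ih hP' fun q hq => hf q (mem_insert_of_mem hq)
    have hH := (hf p (mem_insert_self p P)).mul_left_of_invariant hp.ne_zero
      (exactDivisorWeight_mul_left c hP' hp hpP)
    have h := hμ'.add ((((hμ'.sieve_singleton hp.ne_zero hH).dilate hp.ne_zero).const_smul
      (2 : ℝ)).const_smul (c p - 1))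
    simp only [smul_eq_mul] at h
    convert h.congr fun m _ => ?_ using 1
    · rw [prod_insert hpP]
      ring
    · rw [← hH.ite_exact_dvd hp.ne_zero, exactDivisorWeight_insert c hpP]
      split_ifs <;> ring

theorem heckeRelation_latticeR {p : ℕ} (hp : p.Prime) (hp1 : p % 4 = 1) :
    HeckeRelation (fun m => (latticeR m : ℝ)) p 2 1 := fun m => by
  obtain ⟨π, hπ⟩ := exists_norm_eq_of_mod_four_eq_one hp hp1
  have h := heckeRelation_normSum_of_norm_eq 1 hp (by omega) hπ m
  have hdilate : dilate p (normSum 1) m = dilate p (fun m => (latticeR m : ℝ)) m := by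
    by_cases hpm : p ∣ m
    · obtain ⟨n, rfl⟩ := hpm
      simp [dilate_mul hp.ne_zero, normSum_one]
    · simp [dilate_of_not_dvd hpm]
  simp only [normSum_one, hdilate, MonoidHom.one_apply, one_add_one_eq_two] at h
  apply Complex.ofReal_injective
  simpa using h

namespace IsAngular

variable {F : GaussianInt →* ℂ} (hF : IsAngular F) (hI : F ⟨0, 1⟩ = 1)
include hF hI

theorem norm_normSum_le_exactDivisorWeight_mul {P : Finset ℕ}
    (hP : ∀ p ∈ P, p.Prime ∧ p % 4 = 1) {m : ℕ} (hm : m ≠ 0) :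
    ‖normSum F m‖ ≤ exactDivisorWeight (fun p => |heckeCos F p|) P m * latticeR m := by
  induction P using Finset.induction_on generalizing m with
  | empty => simpa [exactDivisorWeight] using hF.norm_normSum_le hm
  | insert p P hpP ih =>
    obtain ⟨hp, hp1⟩ := hP p (mem_insert_self p P)
    have hP' : ∀ q ∈ P, q.Prime ∧ q % 4 = 1 := fun q hq => hP q (mem_insert_of_mem hq)
    rw [exactDivisorWeight_insert _ hpP]
    split_ifs with h
    · obtain ⟨⟨n, rfl⟩, hn⟩ := h
      rw [Nat.mul_dvd_mul_iff_left hp.pos] at hn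
      rw [exactDivisorWeight_mul_left _ (fun q hq => (hP' q hq).1) hp hpP,
        (heckeRelation_latticeR hp hp1).apply_mul_of_not_dvd hn,
        (heckeRelation_normSum hI hp).apply_mul_of_not_dvd hn,
        hF.normSum_eq_mul_heckeCos hI hp hp1,
        show (8 * heckeCos F p / 4 : ℂ) = ((2 * heckeCos F p : ℝ) : ℂ) by push_cast; ring,
        norm_mul, Complex.norm_real, Real.norm_eq_abs, abs_mul, abs_two]
      calc 2 * |heckeCos F p| * ‖normSum F n‖ ≤ 2 * |heckeCos F p| * _ :=
            mul_le_mul_of_nonneg_left (ih hP' (right_ne_zero_of_mul hm)) (by positivity)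
        _ = _ := by ring
    · rw [one_mul]
      exact ih hP' hm

theorem one_sub_heckeCos_sq_le {p : ℕ} (hp : p.Prime) (hp1 : p % 4 = 1) :
    1 - heckeCos (F ^ 2) p ≤ 4 * (1 - |heckeCos F p|) := by
  obtain ⟨π, hπ⟩ := exists_norm_eq_of_mod_four_eq_one hp hp1
  have hp2 : p ≠ 2 := by omega
  have hI2 : (F ^ 2) ⟨0, 1⟩ = 1 := by rw [MonoidHom.pow_apply, hI, one_pow]
  have hcos : heckeCos (F ^ 2) p = 2 * heckeCos F p ^ 2 - 1 := by
    have hnorm := Complex.sq_norm_sub_sq_re (F π)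
    rw [hF.norm_apply π (prime_of_norm_eq_prime hp hπ).ne_zero] at hnorm
    rw [hF.sq.heckeCos_eq hI2 hp hp2 hπ, hF.heckeCos_eq hI hp hp2 hπ, MonoidHom.pow_apply, pow_two,
      Complex.mul_re]
    linarith
  rw [hcos, ← sq_abs]
  nlinarith [sq_nonneg (1 - |heckeCos F p|)]

end IsAngular

theorem one_sub_mul_nonneg_and_le_exp {c x : ℝ} (hc0 : 0 ≤ c) (hc1 : c ≤ 1) (hx0 : 0 ≤ x)
    (hx : x ≤ 1 / 4) :
    0 ≤ 1 - (1 - c) * (2 * x) * (1 - x) ^ 2 ∧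
      1 - (1 - c) * (2 * x) * (1 - x) ^ 2 ≤ Real.exp (-((1 - c) * x)) := by
  have hy : 0 ≤ (1 - c) * x := mul_nonneg (sub_nonneg.2 hc1) hx0
  have hy1 : (1 - c) * x ≤ 1 / 4 := by nlinarith
  have hsq : 1 / 2 ≤ (1 - x) ^ 2 := by nlinarith
  have hsq1 : (1 - x) ^ 2 ≤ 1 := by nlinarith
  constructor
  · nlinarith
  · refine .trans ?_ (Real.add_one_le_exp _)
    nlinarith

theorem IsAngular.prod_le_exp_sum_splitDefect {F : GaussianInt →* ℂ} (hF : IsAngular F)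
    (hI : F ⟨0, 1⟩ = 1) (N : ℕ) :
    ∏ p ∈ range N with p.Prime ∧ p % 4 = 1,
        (1 - (1 - |heckeCos F p|) * (2 / p) * (1 - 1 / p) ^ 2) ≤
      Real.exp (-(1 / 4 * ∑ p ∈ range N, splitDefect (F ^ 2) p)) := by
  have hsum : ∑ p ∈ range N, splitDefect (F ^ 2) p =
      ∑ p ∈ range N with p.Prime ∧ p % 4 = 1, (1 - heckeCos (F ^ 2) p) / p :=
    (sum_filter _ _).symm
  rw [hsum, mul_sum, ← sum_neg_distrib, Real.exp_sum]
  have hfactor : ∀ p ∈ {p ∈ range N | p.Prime ∧ p % 4 = 1},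
      0 ≤ 1 - (1 - |heckeCos F p|) * (2 / p) * (1 - 1 / p) ^ 2 ∧
        1 - (1 - |heckeCos F p|) * (2 / p) * (1 - 1 / p) ^ 2 ≤
          Real.exp (-((1 - |heckeCos F p|) * (1 / p))) := fun p hp => by
    obtain ⟨-, hp, hp1⟩ := mem_filter.1 hp
    have hp4 : (4 : ℝ) ≤ p := by
      have := hp.two_le
      exact_mod_cast (by omega : 4 ≤ p)
    rw [← mul_one_div (2 : ℝ)]
    exact one_sub_mul_nonneg_and_le_exp (abs_nonneg _) (hF.abs_heckeCos_le_one hI hp hp1)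
      (by positivity) (by gcongr)
  refine prod_le_prod (fun p hp => (hfactor p hp).1) fun p hp => (hfactor p hp).2.trans ?_
  obtain ⟨-, hp, hp1⟩ := mem_filter.1 hp
  rw [Real.exp_le_exp, neg_le_neg_iff, ← mul_div_assoc, ← mul_one_div]
  gcongr
  linarith [hF.one_sub_heckeCos_sq_le hI hp hp1]

theorem IsAngular.hasMean_norm_normSum {F : GaussianInt →* ℂ} (hF : IsAngular F)
    (hmean : HasMean (normSum (F ^ 2)) 0) : HasMean (fun m => ‖normSum F m‖) 0 := by
  by_cases hI : F ⟨0, 1⟩ = 1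
  · have hI2 : (F ^ 2) ⟨0, 1⟩ = 1 := by rw [MonoidHom.pow_apply, hI, one_pow]
    have hdiv := (not_summable_iff_tendsto_nat_atTop_of_nonneg (hF.sq.splitDefect_nonneg hI2)).1
      (hF.sq.not_summable_splitDefect hI2 hmean)
    have hexp := (Real.tendsto_exp_neg_atTop_nhds_zero.comp
      (hdiv.const_mul_atTop (by norm_num : (0 : ℝ) < 1 / 4))).const_mul Real.pi
    have hP (N : ℕ) : ∀ p ∈ {p ∈ range N | p.Prime ∧ p % 4 = 1}, p.Prime ∧ p % 4 = 1 :=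
      fun p hp => (mem_filter.1 hp).2
    have hweight (N : ℕ) := hasMean_latticeR.exactDivisorWeight_mul (fun p => |heckeCos F p|)
      (fun p hp => (hP N p hp).1) fun p hp => heckeRelation_latticeR (hP N p hp).1 (hP N p hp).2
    have hle (N m : ℕ) (hm : m ≠ 0) := (norm_norm (normSum F m)).trans_le
      (hF.norm_normSum_le_exactDivisorWeight_mul hI (hP N) hm)
    have hlim := squeeze_zero (fun N => ge_of_tendsto' (hweight N) fun n => ?_)
      (fun N => mul_le_mul_of_nonneg_left (hF.prod_le_exp_sum_splitDefect hI N) Real.pi_pos.le)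
      (by rwa [mul_zero] at hexp)
    · exact .zero_of_norm_le hweight hlim hle
    · exact smul_nonneg (by positivity) <| sum_nonneg fun m hm =>
        (norm_nonneg _).trans (hle N m (Nat.one_le_iff_ne_zero.1 (mem_Icc.1 hm).1))
  · simp [funext (normSum_eq_zero_of_apply_I_ne_one hI), HasMean]

end ExactDivisors

section FourierBound

theorem norm_fourierCoeffOn_le {a b : ℝ} (hab : a < b) {f : ℝ → ℂ} {C : ℝ} (hC : ∀ x, ‖f x‖ ≤ C)
    (n : ℤ) : ‖fourierCoeffOn hab f n‖ ≤ C := by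
  have hba : 0 < b - a := sub_pos.2 hab
  have h := intervalIntegral.norm_integral_le_of_norm_le_const (a := a) (b := b)
    (f := fun x : ℝ => fourier (-n) (x : AddCircle (b - a)) • f x) (C := C) fun x _ => by
      rw [norm_smul, fourier_apply, Circle.norm_coe, one_mul]
      exact hC x
  rw [fourierCoeffOn_eq_integral, norm_smul, Real.norm_of_nonneg (by positivity), one_div,
    inv_mul_le_iff₀' hba]
  rwa [abs_of_pos hba] at h

theorem norm_fourierCoeffOn_of_hasDerivAt {a b : ℝ} (hab : a < b) {f f' : ℝ → ℂ} {n : ℤ}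
    (hn : n ≠ 0) (hf : ∀ x, HasDerivAt f (f' x) x) (hf' : IntervalIntegrable f' volume a b)
    (hfab : f b = f a) :
    ‖fourierCoeffOn hab f n‖ = (b - a) / (2 * Real.pi * |(n : ℝ)|) * ‖fourierCoeffOn hab f' n‖ := by
  rw [fourierCoeffOn_of_hasDerivAt hab hn (fun x _ => hf x) hf', hfab, sub_self, mul_zero, zero_sub,
    norm_mul, norm_neg, norm_mul, ← Complex.ofReal_sub, Complex.norm_real,
    Real.norm_of_nonneg (sub_pos.2 hab).le]
  simp only [neg_mul, one_div, inv_neg, norm_neg, norm_inv, norm_mul, Complex.norm_ofNat,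
    Complex.norm_real, Real.norm_of_nonneg Real.pi_pos.le, Complex.norm_I, Complex.norm_intCast]
  ring

theorem norm_fourierCoeffOn_le_of_hasDerivAt_two {f f' f'' : ℝ → ℂ} {C : ℝ}
    (hf : ∀ x, HasDerivAt f (f' x) x) (hf' : ∀ x, HasDerivAt f' (f'' x) x)
    (hf'' : Continuous f'') (hper : Function.Periodic f (2 * Real.pi)) (hC : ∀ x, ‖f'' x‖ ≤ C)
    {n : ℤ} (hn : n ≠ 0) :
    ‖fourierCoeffOn (neg_lt_self Real.pi_pos) f n‖ ≤ C / (n : ℝ) ^ 2 := by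
  have hends {φ : ℝ → ℂ} (hφ : Function.Periodic φ (2 * Real.pi)) : φ Real.pi = φ (-Real.pi) := by
    rw [← hφ (-Real.pi)]
    ring_nf
  have hper' : Function.Periodic f' (2 * Real.pi) := fun x => by
    have hshift := (hf (x + 2 * Real.pi)).comp_add_const x (2 * Real.pi)
    rw [funext hper] at hshift
    exact hshift.unique (hf x)
  have hfactor : (Real.pi - -Real.pi) / (2 * Real.pi * |(n : ℝ)|) = |(n : ℝ)|⁻¹ := by
    field_simp
    ring
  have hf'c : Continuous f' := continuous_iff_continuousAt.2 fun x => (hf' x).continuousAt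
  rw [norm_fourierCoeffOn_of_hasDerivAt _ hn hf (hf'c.intervalIntegrable _ _) (hends hper),
    norm_fourierCoeffOn_of_hasDerivAt _ hn hf' (hf''.intervalIntegrable _ _) (hends hper'), hfactor]
  calc |(n : ℝ)|⁻¹ * (|(n : ℝ)|⁻¹ * ‖fourierCoeffOn _ f'' n‖)
      ≤ |(n : ℝ)|⁻¹ * (|(n : ℝ)|⁻¹ * C) := by
        gcongr
        exact norm_fourierCoeffOn_le _ hC n
    _ = C / (n : ℝ) ^ 2 := by
        rw [← sq_abs]
        ring

theorem hasSum_fourierCoeffOn_mul_exp {f : ℝ → ℂ} (hper : Function.Periodic f (2 * Real.pi))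
    (hf : Continuous f) (hsum : Summable (fourierCoeffOn (neg_lt_self Real.pi_pos) f)) (x : ℝ) :
    HasSum (fun k : ℤ => fourierCoeffOn (neg_lt_self Real.pi_pos) f k *
      Complex.exp (k * x * Complex.I)) (f x) := by
  have : Fact (0 < 2 * Real.pi) := ⟨Real.two_pi_pos⟩
  let F : C(AddCircle (2 * Real.pi), ℂ) := ⟨hper.lift, continuous_coinduced_dom.2 hf⟩
  have hcoeff (k : ℤ) : fourierCoeff F k = fourierCoeffOn (neg_lt_self Real.pi_pos) f k := by
    rw [fourierCoeffOn_eq_integral, fourierCoeff_eq_intervalIntegral _ _ (-Real.pi),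
      show -Real.pi + 2 * Real.pi = Real.pi by ring, show Real.pi - -Real.pi = 2 * Real.pi by ring]
    rfl
  convert! has_pointwise_sum_fourier_series_of_summable (f := F) (by rwa [funext hcoeff])
    (x : AddCircle (2 * Real.pi)) using 2 with k
  rw [hcoeff, fourier_coe_apply, smul_eq_mul]
  congr 2
  push_cast
  field_simp

/-- The mean of a `2π`-periodic function over one period. -/
noncomputable def periodMean (f : ℝ → ℝ) : ℝ :=
  1 / (2 * Real.pi) * ∫ θ in (-Real.pi)..Real.pi, f θ

theorem fourierCoeffOn_ofReal_zero (f : ℝ → ℝ) :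
    fourierCoeffOn (neg_lt_self Real.pi_pos) (fun x => (f x : ℂ)) 0 = periodMean f := by
  rw [fourierCoeffOn_eq_integral, periodMean, show Real.pi - -Real.pi = 2 * Real.pi by ring]
  simp only [neg_zero, fourier_zero, one_smul]
  rw [intervalIntegral.integral_ofReal, Complex.real_smul, Complex.ofReal_mul]

theorem summable_inv_int_sq : Summable fun k : ℤ => ((k : ℝ) ^ 2)⁻¹ := by
  simpa using Real.summable_one_div_int_pow.2 one_lt_two

theorem summable_norm_sum_exp_div_sq {ι : Type*} (s : Finset ι) (θ : ι → ℝ) :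
    Summable fun k : ℤ => ‖∑ u ∈ s, Complex.exp (k * θ u * Complex.I)‖ / (k : ℝ) ^ 2 := by
  refine (summable_inv_int_sq.mul_left (#s : ℝ)).of_nonneg_of_le (fun k => by positivity)
    fun k => ?_
  rw [div_eq_mul_inv]
  gcongr
  refine (norm_sum_le _ _).trans_eq ?_
  simp [← Complex.ofReal_intCast, ← Complex.ofReal_mul, Complex.norm_exp_ofReal_mul_I]

variable {f : ℝ → ℝ} (hper : Function.Periodic f (2 * Real.pi)) (hf : ContDiff ℝ 2 f) {C : ℝ}
  (hC : ∀ x, |deriv (deriv f) x| ≤ C)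
include hper hf hC

theorem norm_fourierCoeffOn_ofReal_le {k : ℤ} (hk : k ≠ 0) :
    ‖fourierCoeffOn (neg_lt_self Real.pi_pos) (fun x => (f x : ℂ)) k‖ ≤ C / (k : ℝ) ^ 2 := by
  have hf' : ContDiff ℝ 1 (deriv f) := hf.iterate_deriv' 1 1
  refine norm_fourierCoeffOn_le_of_hasDerivAt_two
    (fun x => ((hf.differentiable two_ne_zero) x).hasDerivAt.ofReal_comp)
    (fun x => ((hf'.differentiable one_ne_zero) x).hasDerivAt.ofReal_comp)
    (Complex.continuous_ofReal.comp (hf'.continuous_deriv le_rfl))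
    (hper.comp Complex.ofReal) (fun x => ?_) hk
  rw [Complex.norm_real]
  exact hC x

theorem hasSum_fourierCoeffOn_ofReal_mul_exp (x : ℝ) :
    HasSum (fun k : ℤ => fourierCoeffOn (neg_lt_self Real.pi_pos) (fun x => (f x : ℂ)) k *
      Complex.exp (k * x * Complex.I)) (f x : ℂ) := by
  refine hasSum_fourierCoeffOn_mul_exp (hper.comp Complex.ofReal)
    (Complex.continuous_ofReal.comp hf.continuous)
    (.of_norm_bounded_eventually (summable_inv_int_sq.mul_left C) ?_) x
  filter_upwards [(Set.finite_singleton (0 : ℤ)).compl_mem_cofinite] with k hk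
  exact norm_fourierCoeffOn_ofReal_le hper hf hC hk

theorem abs_sum_sub_card_mul_periodMean_le {ι : Type*} (s : Finset ι) (θ : ι → ℝ) :
    |∑ u ∈ s, f (θ u) - #s * periodMean f| ≤
      C * ∑' k : ℤ, ‖∑ u ∈ s, Complex.exp (k * θ u * Complex.I)‖ / (k : ℝ) ^ 2 := by
  have hseries := (hasSum_sum fun u (_ : u ∈ s) =>
    hasSum_fourierCoeffOn_ofReal_mul_exp hper hf hC (θ u)).sub
      (hasSum_ite_eq (0 : ℤ) (#s * periodMean f : ℂ))
  have hbound := hseries.norm_le_of_bounded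
    ((summable_norm_sum_exp_div_sq s θ).mul_left C).hasSum fun k => ?_
  · rw [tsum_mul_left] at hbound
    rw [← Real.norm_eq_abs, ← Complex.norm_real]
    push_cast
    exact hbound
  · rw [← mul_sum]
    rcases eq_or_ne k 0 with rfl | hk
    · simp [fourierCoeffOn_ofReal_zero, mul_comm]
    · rw [if_neg hk, sub_zero, norm_mul, mul_div_left_comm, mul_comm]
      exact mul_le_mul_of_nonneg_left (norm_fourierCoeffOn_ofReal_le hper hf hC hk)
        (norm_nonneg _)

theorem abs_sub_periodMean_le (x : ℝ) :
    |f x - periodMean f| ≤ C * ∑' k : ℤ, ((k : ℝ) ^ 2)⁻¹ := by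
  have h := abs_sum_sub_card_mul_periodMean_le hper hf hC {()} fun _ => x
  simpa [← Complex.ofReal_intCast, ← Complex.ofReal_mul, Complex.norm_exp_ofReal_mul_I] using h

end FourierBound

section Discrepancy

/-- The Weyl-sum discrepancy `∑_{k ≠ 0} |S(m, k)| / k²` of the angles of the lattice points on the
circle of squared radius `m`; the term `k = 0` is a division by zero, hence `0`. -/
noncomputable def circleDiscrepancy (m : ℕ) : ℝ :=
  ∑' k : ℤ, ‖latticeS m k‖ / (k : ℝ) ^ 2

theorem hasMean_norm_latticeS {k : ℤ} (hk : k ≠ 0) : HasMean (fun m => ‖latticeS m k‖) 0 := by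
  have hmean := (isAngular_gaussianChar k).hasMean_norm_normSum <| by
    rw [gaussianChar_sq]
    exact hasMean_normSum_gaussianChar (mul_ne_zero two_ne_zero hk)
  exact hmean.congr fun m hm => by rw [normSum_gaussianChar k hm]

theorem norm_latticeS_le (m : ℕ) (k : ℤ) : ‖latticeS m k‖ ≤ latticeR m := by
  refine (norm_sum_le _ _).trans_eq ?_
  simp [latticeR, ← Complex.ofReal_intCast, ← Complex.ofReal_mul, Complex.norm_exp_ofReal_mul_I]

theorem hasMean_circleDiscrepancy : HasMean circleDiscrepancy 0 := by
  have h := HasMean.tsum (f := fun (k : ℤ) m => ‖latticeS m k‖ / (k : ℝ) ^ 2) (μ := fun _ => 0)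
    (fun k => ?_) summable_inv_int_sq hasMean_latticeR fun k m => ?_
  · rwa [tsum_zero] at h
  · rcases eq_or_ne k 0 with rfl | hk
    · simp [HasMean]
    · simpa [div_eq_inv_mul] using (hasMean_norm_latticeS hk).const_smul ((k : ℝ) ^ 2)⁻¹
  · rw [norm_div, norm_norm, norm_pow, Real.norm_eq_abs, sq_abs, div_eq_inv_mul]
    gcongr
    exact norm_latticeS_le m k

theorem norm_sum_exp_latticeTheta_sub (m : ℕ) (k : ℤ) (t : ℝ) :
    ‖∑ u ∈ latticeCircle m, Complex.exp (k * (latticeTheta u - t : ℝ) * Complex.I)‖ =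
      ‖latticeS m k‖ := by
  have hrot : ∑ u ∈ latticeCircle m, Complex.exp (k * (latticeTheta u - t : ℝ) * Complex.I) =
      Complex.exp ((-(k * t) : ℝ) * Complex.I) * latticeS m k := by
    rw [latticeS, mul_sum]
    refine sum_congr rfl fun u _ => ?_
    rw [← Complex.exp_add]
    push_cast
    ring_nf
  rw [hrot, norm_mul, Complex.norm_exp_ofReal_mul_I, one_mul]

theorem abs_sum_latticeTheta_sub_le {f : ℝ → ℝ} (hper : Function.Periodic f (2 * Real.pi))
    (hf : ContDiff ℝ 2 f) {C : ℝ} (hC : ∀ x, |deriv (deriv f) x| ≤ C) (m : ℕ) (t : ℝ) :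
    |∑ u ∈ latticeCircle m, f (latticeTheta u - t) - latticeR m * periodMean f| ≤
      C * circleDiscrepancy m := by
  simpa only [norm_sum_exp_latticeTheta_sub, latticeR, circleDiscrepancy] using
    abs_sum_sub_card_mul_periodMean_le hper hf hC (latticeCircle m) fun u => latticeTheta u - t

end Discrepancy

section Consistency

theorem tendsto_setIntegral_disc {E : Type*} [NormedAddCommGroup E] [NormedSpace ℝ E]
    {φ : ℝ × ℝ → E} (hφ : Integrable φ) :
    Tendsto (fun R => ∫ w in disc R, φ w) atTop (𝓝 (∫ w, φ w)) := by
  have hcover : AECover volume atTop disc :=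
    ⟨ae_of_all _ fun w => (tendsto_pow_atTop two_ne_zero).eventually_ge_atTop _,
      fun R => (isClosed_disc R).measurableSet⟩
  exact hcover.integral_tendsto_of_countably_generated hφ

theorem Qdisc_eq_sum_latticeCircle (g : ℝ × ℝ → ℝ → ℝ) {h : ℝ} (hh : 0 < h) (R : ℝ) :
    Qdisc g h R = h ^ 2 * ∑ m ∈ Icc 1 ⌊(R / h) ^ 2⌋₊, ∑ ζ ∈ latticeCircle m,
      1 / latticeR m * ∑ u ∈ latticeCircle m,
        g (meshPoint h ζ) (latticeTheta u - latticeTheta ζ) := by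
  have hset : {ζ : ℤ × ℤ | ζ ≠ 0 ∧ h ^ 2 * ((ζ.1 : ℝ) ^ 2 + (ζ.2 : ℝ) ^ 2) ≤ R ^ 2} =
      puncturedLatticeDisc ⌊(R / h) ^ 2⌋₊ := by
    ext ζ
    rw [mem_coe, mem_puncturedLatticeDisc_floor hh, Set.mem_sdiff_singleton, and_comm]
    simp [disc, meshPoint, Prod.ext_iff, hh.ne', mul_add, mul_pow]
  rw [Qdisc, hset, finsum_mem_coe_finset, sum_puncturedLatticeDisc]
  refine congrArg _ <| sum_congr rfl fun m _ => sum_congr rfl fun ζ hζ => ?_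
  rw [mem_latticeCircle.1 hζ, Int.toNat_natCast]
  rfl

variable {g : ℝ × ℝ → ℝ → ℝ} (hper : ∀ w, Function.Periodic (g w) (2 * Real.pi))
  (hθ : ∀ w, ContDiff ℝ 2 (g w)) {C : ℝ} (hC : ∀ w θ, |deriv (deriv (g w)) θ| ≤ C)
include hper hθ hC

theorem abs_Qdisc_sub_le {h : ℝ} (hh : 0 < h) (R : ℝ) :
    |Qdisc g h R - h ^ 2 * ∑ m ∈ Icc 1 ⌊(R / h) ^ 2⌋₊, ∑ ζ ∈ latticeCircle m,
        periodMean (g (meshPoint h ζ))| ≤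
      h ^ 2 * (C * ∑ m ∈ Icc 1 ⌊(R / h) ^ 2⌋₊, circleDiscrepancy m) := by
  have hpoint (m : ℕ) (ζ : ℤ × ℤ) (hζ : ζ ∈ latticeCircle m) :
      |1 / latticeR m * ∑ u ∈ latticeCircle m, g (meshPoint h ζ) (latticeTheta u - latticeTheta ζ) -
        periodMean (g (meshPoint h ζ))| ≤ C * circleDiscrepancy m / latticeR m := by
    have hr : (0 : ℝ) < latticeR m := Nat.cast_pos.2 (card_pos.2 ⟨ζ, hζ⟩)
    rw [le_div_iff₀ hr, ← abs_of_pos hr, ← abs_mul, sub_mul, abs_of_pos hr, one_div_mul_eq_div,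
      div_mul_cancel₀ _ hr.ne', mul_comm (periodMean _)]
    exact abs_sum_latticeTheta_sub_le (hper _) (hθ _) (hC _) m _
  have hcircle (m : ℕ) : #(latticeCircle m) • (C * circleDiscrepancy m / latticeR m) ≤
      C * circleDiscrepancy m := by
    have hC0 : 0 ≤ C := (abs_nonneg _).trans (hC 0 0)
    have hdisc : 0 ≤ circleDiscrepancy m := tsum_nonneg fun k => by positivity
    rw [nsmul_eq_mul, mul_div_left_comm]
    exact mul_le_of_le_one_right (mul_nonneg hC0 hdisc) (div_self_le_one _)
  rw [Qdisc_eq_sum_latticeCircle g hh, ← mul_sub, ← sum_sub_distrib, abs_mul,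
    abs_of_nonneg (sq_nonneg h), mul_sum]
  gcongr
  refine (abs_sum_le_sum_abs _ _).trans (sum_le_sum fun m _ => ?_)
  rw [← sum_sub_distrib]
  exact (abs_sum_le_sum_abs _ _).trans ((sum_le_card_nsmul _ _ _ (hpoint m)).trans (hcircle m))

variable (hw : ∀ θ, Continuous fun w => g w θ)
include hw

theorem continuous_periodMean : Continuous fun w => periodMean (g w) := by
  have hosc (w : ℝ × ℝ) (θ : ℝ) : ‖g w θ - g w 0‖ ≤ 2 * (C * ∑' k : ℤ, ((k : ℝ) ^ 2)⁻¹) := by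
    have hθ' := abs_sub_periodMean_le (hper w) (hθ w) (hC w) θ
    have h0 := abs_sub_periodMean_le (hper w) (hθ w) (hC w) 0
    rw [abs_sub_comm] at h0
    linarith [norm_sub_le_norm_sub_add_norm_sub (g w θ) (periodMean (g w)) (g w 0),
      Real.norm_eq_abs (g w θ - periodMean (g w)), Real.norm_eq_abs (periodMean (g w) - g w 0)]
  have hmean (w : ℝ × ℝ) : periodMean (g w) =
      g w 0 + 1 / (2 * Real.pi) * ∫ θ in (-Real.pi)..Real.pi, (g w θ - g w 0) := by
    rw [intervalIntegral.integral_sub ((hθ w).continuous.intervalIntegrable _ _)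
      intervalIntegrable_const, intervalIntegral.integral_const, periodMean, smul_eq_mul]
    field_simp
    ring
  simp only [hmean]
  refine (hw 0).add (continuous_const.mul ?_)
  exact intervalIntegral.continuous_of_dominated_interval
    (fun w => ((hθ w).continuous.sub continuous_const).aestronglyMeasurable)
    (fun w => ae_of_all _ fun θ _ => hosc w θ) intervalIntegrable_const
    (ae_of_all _ fun θ _ => (hw θ).sub (hw 0))

theorem tendsto_Qdisc {R : ℝ} (hR : 0 < R) :
    Tendsto (fun h => Qdisc g h R) (𝓝[>] 0) (𝓝 (∫ w in disc R, periodMean (g w))) := by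
  have hcont := continuous_periodMean hper hθ hC hw
  obtain ⟨B, hB⟩ := (Metric.isCompact_of_isClosed_isBounded (isClosed_disc R)
    (isBounded_disc R)).exists_bound_of_continuousOn hcont.continuousOn
  have hriemann := tendsto_sq_smul_sum_latticeCircle hcont.continuousOn hB
  have herror : Tendsto (fun h : ℝ => h ^ 2 *
      (C * ∑ m ∈ Icc 1 ⌊(R / h) ^ 2⌋₊, circleDiscrepancy m)) (𝓝[>] 0) (𝓝 0) := by
    simpa [mul_left_comm] using (hasMean_circleDiscrepancy.tendsto_sq_smul_sum hR).const_mul C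
  have hle : ∀ᶠ h in 𝓝[>] 0, ‖Qdisc g h R - h ^ 2 • ∑ m ∈ Icc 1 ⌊(R / h) ^ 2⌋₊,
      ∑ ζ ∈ latticeCircle m, periodMean (g (meshPoint h ζ))‖ ≤
        h ^ 2 * (C * ∑ m ∈ Icc 1 ⌊(R / h) ^ 2⌋₊, circleDiscrepancy m) := by
    filter_upwards [self_mem_nhdsWithin] with h hh
    exact abs_Qdisc_sub_le hper hθ hC hh R
  simpa using (squeeze_zero_norm' hle herror).add hriemann

end Consistency

theorem integrable_intervalIntegral_of_integral_norm_le {α E : Type*} [MeasurableSpace α]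
    {ν : Measure α} [SFinite ν] [NormedAddCommGroup E] [NormedSpace ℝ E] {g : α → ℝ → E}
    {C₀ a b : ℝ}
    (hg : AEStronglyMeasurable (Function.uncurry g) (ν.prod (volume.restrict (Set.uIoc a b))))
    (hint : ∀ θ, Integrable (fun w => g w θ) ν) (hC₀ : ∀ θ, ∫ w, ‖g w θ‖ ∂ν ≤ C₀) :
    Integrable (fun w => ∫ θ in a..b, g w θ) ν := by
  have hfin : IsFiniteMeasure (volume.restrict (Set.uIoc a b)) :=
    isFiniteMeasure_restrict.2 measure_Ioc_lt_top.ne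
  have hprod : Integrable (Function.uncurry g) (ν.prod (volume.restrict (Set.uIoc a b))) := by
    refine (integrable_prod_iff' hg).2 ⟨ae_of_all _ hint, ?_⟩
    refine .of_bound hg.norm.prod_swap.integral_prod_right' C₀ (ae_of_all _ fun θ => ?_)
    rw [Real.norm_of_nonneg (integral_nonneg fun _ => norm_nonneg _)]
    exact hC₀ θ
  simp only [intervalIntegral.intervalIntegral_eq_integral_uIoc]
  exact hprod.integral_prod_left.smul _

theorem integrable_periodMean {g : ℝ × ℝ → ℝ → ℝ} (hw : ∀ θ, Continuous fun w => g w θ)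
    (hθ : ∀ w, Continuous (g w)) {ω : ℝ × ℝ → ℝ} (hω : ∀ w, 1 ≤ ω w)
    (hint : ∀ θ, Integrable fun w => |g w θ| * ω w) {C₀ : ℝ}
    (hC₀ : ∀ θ, ∫ w, |g w θ| * ω w ≤ C₀) : Integrable fun w => periodMean (g w) := by
  have hle (w : ℝ × ℝ) (θ : ℝ) : ‖g w θ‖ ≤ |g w θ| * ω w :=
    le_mul_of_one_le_right (abs_nonneg _) (hω w)
  have hgint (θ : ℝ) : Integrable fun w => g w θ :=
    (hint θ).mono' (hw θ).aestronglyMeasurable (ae_of_all _ fun w => hle w θ)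
  have hmeas : StronglyMeasurable (Function.uncurry g) :=
    (stronglyMeasurable_uncurry_of_continuous_of_stronglyMeasurable
      (u := fun θ w => g w θ) hθ fun θ => (hw θ).stronglyMeasurable).comp_measurable measurable_swap
  exact (integrable_intervalIntegral_of_integral_norm_le hmeas.aestronglyMeasurable hgint fun θ =>
    (integral_mono (hgint θ).norm (hint θ) (hle · θ)).trans (hC₀ θ)).const_mul _

theorem consistency_truncated_general (g : ℝ × ℝ → ℝ → ℝ)
    (hper : ∀ w, Function.Periodic (g w) (2 * Real.pi)) (hw : ∀ θ, Continuous fun w => g w θ)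
    (hθ2 : ∀ w, ContDiff ℝ 2 (g w)) (hθbdd : ∃ C : ℝ, ∀ w θ, |deriv (deriv (g w)) θ| ≤ C)
    (hint : Integrable fun w => periodMean (g w)) :
    ∀ ε > (0 : ℝ), ∃ R > (0 : ℝ), ∃ h₀ > (0 : ℝ), ∀ h : ℝ, 0 < h → h ≤ h₀ →
      |Qcont g - Qdisc g h R| ≤ ε := by
  obtain ⟨C, hC⟩ := hθbdd
  intro ε hε
  have htail : Tendsto (fun R => |Qcont g - ∫ w in disc R, periodMean (g w)|) atTop (𝓝 0) := by
    have h := ((tendsto_setIntegral_disc hint).const_sub (Qcont g)).abs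
    rwa [show ∫ w, periodMean (g w) = Qcont g from rfl, sub_self, abs_zero] at h
  obtain ⟨R, hRε, hR⟩ := ((htail.eventually_lt_const hε).and (eventually_gt_atTop 0)).exists
  have hdisc := ((tendsto_Qdisc hper hθ2 hC hw hR).const_sub (Qcont g)).abs
  obtain ⟨h₀, hh₀, hsub⟩ := mem_nhdsGT_iff_exists_Ioc_subset.1 (hdisc.eventually_le_const hRε)
  exact ⟨R, hR, h₀, hh₀, fun h hh hle => hsub ⟨hh, hle⟩⟩

/-- Consistency with explicit truncation: for every `ε > 0` there are `R > 0` and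
`h₀ > 0` such that `|Q - Q^{h,R}| ≤ ε` for all `0 < h ≤ h₀`. -/
theorem consistency_truncated
    (g : ℝ × ℝ → ℝ → ℝ)
    (hper : ∀ w, Function.Periodic (g w) (2 * Real.pi))
    (hw1 : ∀ θ, ContDiff ℝ 1 (fun w => g w θ))
    (hwbdd : ∃ C : ℝ, ∀ w θ, |g w θ| ≤ C ∧ ‖fderiv ℝ (fun w' => g w' θ) w‖ ≤ C)
    (hθ2 : ∀ w, ContDiff ℝ 2 (g w))
    (hθbdd : ∃ C : ℝ, ∀ w θ, |deriv (deriv (g w)) θ| ≤ C)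
    (hint : ∀ θ, MeasureTheory.Integrable (fun w : ℝ × ℝ => |g w θ| * (1 + ‖w‖ ^ 2)))
    (hC0 : ∃ C₀ : ℝ, ∀ θ, (∫ w : ℝ × ℝ, |g w θ| * (1 + ‖w‖ ^ 2)) ≤ C₀) :
    ∀ ε > (0 : ℝ), ∃ R > (0 : ℝ), ∃ h₀ > (0 : ℝ), ∀ h : ℝ, 0 < h → h ≤ h₀ →
      |Qcont g - Qdisc g h R| ≤ ε :=
  consistency_truncated_general g hper (fun θ => (hw1 θ).continuous) hθ2 hθbdd <|
    hC0.elim fun _ => integrable_periodMean (fun θ => (hw1 θ).continuous)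
      (fun w => (hθ2 w).continuous) (fun w => le_add_of_nonneg_right (by positivity)) hint
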